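/- There exists an absolute constant C > 0 such that for all n, d ∈ ℕ, for every convex body K ⊂ ℝⁿ of Lebesgue volume 1, and for every non-constant polynomial f ∈ 𝒫_d(ℝⁿ), one has σ(μ_K ∘ f⁻¹, ε) ≤ C · min{d, n} · (𝔻_K f)^{-1/(2d)} · ε^{1/d} for all ε > 0, where 𝔻_K f := ∫_K (f(x) − ∫_K f(y) dy)² dx. -/

import Mathlib

/-!
The proof reduces the estimate to dimension one by localization and then combines an oscillation
bound for polynomials on intervals with a moment bound for densities with a concave power.

*One-sided estimate.* Let `G` be a test function, `|G| ≤ ε` and `|G'| ≤ 1`, with `G' = 0` on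
`[m, ∞)`. The heart of the matter is the inequality `one_sided`,
`V * T ^ (2 * d) ≤ (C * min d n) ^ (2 * d) * ε ^ 2`, where `V` is the integral over `K` of
`max (f - m) 0 ^ 2` and `T ≥ 0` is the positive part of the integral of `G' ∘ f`.

*Localization.* Lebesgue measure on `K` satisfies the Brunn–Minkowski inequality of dimension `n`
(`BM`, through `brunn_minkowski_add`). The probability measures on `K` that satisfy this inequality
and have the same `V` form a weakly compact set (`isClosed_BM`), so some of them maximize `T`.
Among the maximizers choose one whose barycenter is longest. If its support were not contained in a
line, some hyperplane would cut it into two pieces that both preserve `V` (`exists_bisection`);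
the normalized pieces are again maximizers, with different barycenters, which contradicts
the strict convexity of the squared length. So it suffices to treat measures on a line
(`localization`).

*Dimension one.* A measure on the line satisfying the Brunn–Minkowski inequality is a limit of
measures with densities `ρ` for which `ρ ^ (1 / n)` is concave. By the layer cake formula the
integral of `G'(p) ρ` is an average of integrals of `G'(p)` over the intervals `{ρ ≥ u}`. On an
interval of length `L` on which `p` oscillates by `M`, such an integral is at most of order
`L (ε / M) ^ (1 / d)` (`abs_integral_le_osc`): a Remez-type inequality bounds the set where `p'` is
small, and off it one integrates by parts as in van der Corput's lemma. For every reference point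
`x` with `p x > m` the oscillation is at least `p x - m`, since intervals on which `p > m` contribute
nothing. Raising the bound to the power `2d` and integrating against `(p x - m) ^ 2 ρ(x)` leaves a
moment of the length of `{ρ ≥ ρ(x)}`, which is controlled by `min d n` (`IsDens.moment`): by `n`
because of the concavity of `ρ ^ (1 / n)`, and by `d` because of log-concavity.

*Conclusion.* Some level `m` splits the variance of `f` evenly (`exists_level`). A `C¹` truncation
near `m` writes a test function as the sum of two one-sided ones, of which the second is one-sided
for `-f`.
-/

open MeasureTheory

noncomputable section

/-- The class `C_b^∞(ℝ)` of bounded smooth functions on `ℝ`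
with bounded derivatives of every order. -/
def CbSmooth (φ : ℝ → ℝ) : Prop :=
  ContDiff ℝ (⊤ : ℕ∞) φ ∧ ∀ k : ℕ, ∃ M : ℝ, ∀ t : ℝ, |iteratedDeriv k φ t| ≤ M

/-- The modulus `σ(ν, ε)` of a Borel measure `ν` on `ℝ`. -/
def sigmaMod (ν : Measure ℝ) (ε : ℝ) : ℝ :=
  sSup {y : ℝ | ∃ φ : ℝ → ℝ, CbSmooth φ ∧ (∀ t, |φ t| ≤ ε) ∧ (∀ t, |deriv φ t| ≤ 1) ∧
    y = ∫ t, deriv φ t ∂ν}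

/-! ### A Remez-type inequality -/

section

open Set Filter Topology

/-- A set of measure greater than `k δ` contains `k + 1` points with successive gaps at least `δ`.
Take a point near the infimum, discard everything within `δ` to the right of it, and continue. -/
theorem exists_spaced_points (k : ℕ) : ∀ {E : Set ℝ} {δ : ℝ}, 0 < δ → BddBelow E →
    ENNReal.ofReal (k * δ) < volume E →
    ∃ x : ℕ → ℝ, (∀ i ≤ k, x i ∈ E) ∧ ∀ i < k, x i + δ ≤ x (i + 1) := by
  induction k with
  | zero =>
    intro E δ hδ hE h
    have hne : E.Nonempty := by
      by_contra hne
      rw [Set.not_nonempty_iff_eq_empty] at hne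
      simp [hne] at h
    obtain ⟨x, hx⟩ := hne
    exact ⟨fun _ => x, fun _ _ => hx, fun i hi => absurd hi (by omega)⟩
  | succ k ih =>
    intro E δ hδ hE h
    have hne : E.Nonempty := by
      by_contra hne
      rw [Set.not_nonempty_iff_eq_empty] at hne
      simp [hne] at h
    -- the slack `η` allows for the first point not being the infimum of `E`
    obtain ⟨η, hη, hηE⟩ : ∃ η : ℝ, 0 < η ∧ ENNReal.ofReal ((k + 1 : ℕ) * δ + η) < volume E := by
      obtain ⟨c, hc1, hc2⟩ := exists_between h
      have hc : c ≠ ⊤ := ne_top_of_lt hc2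
      refine ⟨c.toReal - (k + 1 : ℕ) * δ, ?_, ?_⟩
      · have := (ENNReal.ofReal_lt_iff_lt_toReal (by positivity) hc).1 hc1
        linarith
      · rw [add_sub_cancel, ENNReal.ofReal_toReal hc]; exact hc2
    obtain ⟨x0, hx0, hx0'⟩ := exists_lt_of_csInf_lt hne (lt_add_of_pos_right (sInf E) hη)
    have hcov : E ⊆ Icc (sInf E) (x0 + δ) ∪ (E ∩ Ici (x0 + δ)) := by
      intro y hy
      rcases le_total y (x0 + δ) with h1 | h1
      · exact Or.inl ⟨csInf_le hE hy, h1⟩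
      · exact Or.inr ⟨hy, h1⟩
    have hE' : ENNReal.ofReal (k * δ) < volume (E ∩ Ici (x0 + δ)) := by
      by_contra hcon
      rw [not_lt] at hcon
      have h1 : volume E ≤ ENNReal.ofReal (x0 + δ - sInf E) + ENNReal.ofReal (k * δ) := by
        refine (measure_mono hcov).trans ((measure_union_le _ _).trans ?_)
        rw [Real.volume_Icc]
        gcongr
      rw [← ENNReal.ofReal_add (by linarith [csInf_le hE hx0]) (by positivity)] at h1
      have h2 := hηE.trans_le h1
      rw [ENNReal.ofReal_lt_ofReal_iff_of_nonneg (by positivity)] at h2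
      push_cast at h2
      linarith
    obtain ⟨x, hx, hx'⟩ := ih hδ (hE.mono inter_subset_left) hE'
    refine ⟨fun i => if i = 0 then x0 else x (i - 1), ?_, ?_⟩
    · intro i hi
      by_cases h0 : i = 0
      · simp [h0, hx0]
      · simp only [h0, if_false]
        exact (hx (i - 1) (by omega)).1
    · intro i hi
      by_cases h0 : i = 0
      · subst h0
        simpa using (hx 0 (by omega)).2
      · simp only [h0, if_false, Nat.add_eq_zero_iff, one_ne_zero, and_false]
        have := hx' (i - 1) (by omega)
        rwa [show i - 1 + 1 = i + 1 - 1 by omega] at this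

theorem spaced_dist {k : ℕ} {δ : ℝ} {x : ℕ → ℝ} (hx : ∀ i < k, x i + δ ≤ x (i + 1)) :
    ∀ j ≤ k, ∀ i ≤ j, ((j : ℝ) - i) * δ ≤ x j - x i := by
  intro j
  induction j with
  | zero => intro _ i hi; simp [Nat.le_zero.1 hi]
  | succ j ih =>
    intro hj i hi
    rcases Nat.lt_or_ge i (j + 1) with h | h
    · have := ih (by omega) i (by omega)
      have := hx j (by omega)
      push_cast; linarith
    · obtain rfl : i = j + 1 := le_antisymm hi h
      simp

/-- The denominators of the Lagrange basis for the nodes `0, …, k`. -/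
theorem prod_abs_sub_eq (k i : ℕ) (hi : i ≤ k) :
    ∏ j ∈ (Finset.range (k + 1)).erase i, |(i : ℝ) - j| = (i.factorial : ℝ) * (k - i).factorial := by
  have hsplit : (Finset.range (k + 1)).erase i = Finset.range i ∪ Finset.Ico (i + 1) (k + 1) := by
    ext j; simp; omega
  rw [hsplit, Finset.prod_union (by
    rw [Finset.disjoint_left]; intro j; simp; omega)]
  congr 1
  · rw [← Finset.prod_range_add_one_eq_factorial, ← Finset.prod_range_reflect]
    push_cast
    refine Finset.prod_congr rfl fun j hj => ?_
    rw [Finset.mem_range] at hj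
    rw [abs_of_nonneg] <;> rw [Nat.sub_sub, Nat.cast_sub (by omega)] <;> push_cast
    · ring
    · have : (j : ℝ) + 1 ≤ i := by exact_mod_cast hj
      linarith
  · rw [Finset.prod_Ico_eq_prod_range, ← Finset.prod_range_add_one_eq_factorial,
      show k + 1 - (i + 1) = k - i by omega]
    push_cast
    refine Finset.prod_congr rfl fun j _ => ?_
    rw [abs_of_nonpos]
    · ring
    · have : (0 : ℝ) ≤ j := j.cast_nonneg
      linarith

/-- Remez-type inequality: a polynomial of degree at most `k` that is bounded by `α` on a subset of
`[a, b]` of measure larger than `k δ` is controlled on all of `[a, b]`, by Lagrange interpolation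
at `k + 1` points of the subset with gaps at least `δ`. -/
theorem abs_eval_le_of_small_on {k : ℕ} {q : Polynomial ℝ} (hq : q.natDegree ≤ k) {a b α δ : ℝ}
    (hδ : 0 < δ) {E : Set ℝ} (hE : E ⊆ Icc a b) (hα : ∀ x ∈ E, |q.eval x| ≤ α)
    (hvol : ENNReal.ofReal (k * δ) < volume E) {y : ℝ} (hy : y ∈ Icc a b) :
    |q.eval y| ≤ α * ((2 * (b - a) / δ) ^ k / k.factorial) := by
  obtain ⟨x, hxE, hx⟩ := exists_spaced_points k hδ ⟨a, fun z hz => (hE hz).1⟩ hvol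
  have hdist := spaced_dist hx
  have habs : ∀ i ≤ k, ∀ j ≤ k, |(i : ℝ) - j| * δ ≤ |x i - x j| := by
    intro i hi j hj
    rcases le_total i j with h | h
    · have h1 := hdist j hj i h
      have h2 : (i : ℝ) ≤ j := by exact_mod_cast h
      rw [abs_sub_comm, abs_of_nonneg (by linarith)]
      exact h1.trans (by rw [abs_sub_comm]; exact le_abs_self _)
    · have h1 := hdist i hi j h
      have h2 : (j : ℝ) ≤ i := by exact_mod_cast h
      rw [abs_of_nonneg (by linarith)]
      exact h1.trans (le_abs_self _)
  have hinj : Set.InjOn x (Finset.range (k + 1) : Set ℕ) := by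
    intro i hi j hj hij
    simp only [Finset.coe_range, mem_Iio] at hi hj
    have := habs i (by omega) j (by omega)
    rw [hij, sub_self, abs_zero] at this
    have h0 : |(i : ℝ) - j| ≤ 0 := by
      by_contra hcon
      have := mul_pos (not_le.1 hcon) hδ
      linarith
    have := abs_nonpos_iff.1 h0
    exact_mod_cast sub_eq_zero.1 this
  have hα0 : 0 ≤ α := (abs_nonneg _).trans (hα _ (hxE 0 (by omega)))
  have hab : 0 ≤ b - a := by linarith [hy.1, hy.2]
  have hinterp := Lagrange.eq_interpolate (f := q) hinj (by
    rw [Finset.card_range]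
    refine (Polynomial.degree_le_natDegree).trans_lt ?_
    exact_mod_cast Nat.lt_succ_of_le hq)
  have heval : q.eval y = ∑ i ∈ Finset.range (k + 1), q.eval (x i) *
      ∏ j ∈ (Finset.range (k + 1)).erase i, ((y - x j) / (x i - x j)) := by
    conv_lhs => rw [hinterp]
    rw [Lagrange.interpolate_apply, Polynomial.eval_finsetSum]
    refine Finset.sum_congr rfl fun i _ => ?_
    rw [Polynomial.eval_mul, Polynomial.eval_C, Lagrange.basis, Polynomial.eval_prod]
    congr 1
    refine Finset.prod_congr rfl fun j _ => ?_
    rw [Lagrange.basisDivisor]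
    simp [div_eq_inv_mul]
  have hbound : ∀ i ∈ Finset.range (k + 1),
      |∏ j ∈ (Finset.range (k + 1)).erase i, ((y - x j) / (x i - x j))| ≤
        ((b - a) / δ) ^ k / k.factorial * (k.choose i) := by
    intro i hi
    have hik : i ≤ k := by simpa [Nat.lt_succ_iff] using hi
    have hcard : ((Finset.range (k + 1)).erase i).card = k := by
      rw [Finset.card_erase_of_mem hi]; simp
    rw [Finset.abs_prod]
    have h1 : ∏ j ∈ (Finset.range (k + 1)).erase i, |(y - x j) / (x i - x j)| ≤
        ∏ j ∈ (Finset.range (k + 1)).erase i, (((b - a) / δ) * (|(i : ℝ) - j|)⁻¹) := by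
      refine Finset.prod_le_prod (fun _ _ => abs_nonneg _) fun j hj => ?_
      rw [Finset.mem_erase, Finset.mem_range] at hj
      have hpos : 0 < |(i : ℝ) - j| := abs_pos.2 (sub_ne_zero.2 (by exact_mod_cast hj.1.symm))
      have hxj := hE (hxE j (by omega))
      have h2 : |y - x j| ≤ b - a := abs_le.2 ⟨by linarith [hy.1, hxj.2], by linarith [hy.2, hxj.1]⟩
      rw [abs_div, ← div_eq_mul_inv, div_div, mul_comm δ]
      exact div_le_div₀ hab h2 (by positivity) (habs i hik j (by omega))
    refine h1.trans (le_of_eq ?_)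
    rw [Finset.prod_mul_distrib, Finset.prod_const, hcard, Finset.prod_inv_distrib,
      prod_abs_sub_eq k i hik, Nat.cast_choose ℝ hik]
    have : (k.factorial : ℝ) ≠ 0 := by positivity
    field_simp
  rw [heval]
  refine (Finset.abs_sum_le_sum_abs _ _).trans ?_
  calc ∑ i ∈ Finset.range (k + 1), |q.eval (x i) *
        ∏ j ∈ (Finset.range (k + 1)).erase i, ((y - x j) / (x i - x j))|
      ≤ ∑ i ∈ Finset.range (k + 1), α * (((b - a) / δ) ^ k / k.factorial * (k.choose i)) := by
        refine Finset.sum_le_sum fun i hi => ?_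
        rw [abs_mul]
        refine mul_le_mul (hα _ (hxE i ?_)) (hbound i hi) (abs_nonneg _) hα0
        simpa [Nat.lt_succ_iff] using hi
    _ = α * ((2 * (b - a) / δ) ^ k / k.factorial) := by
        rw [← Finset.mul_sum, ← Finset.mul_sum, ← Nat.cast_sum, Nat.sum_range_choose]
        push_cast
        rw [mul_div_assoc, mul_pow]; ring

end

/-! ### The oscillation estimate on an interval -/

section

open Set Filter Topology

/-- A polynomial without roots in `(a, b)` has a constant sign on `[a, b]`. The zero polynomial,
whose `roots` is empty by convention, is no exception. -/
theorem eval_sign_of_no_roots {q : Polynomial ℝ} {a b : ℝ}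
    (h : ∀ z ∈ Ioo a b, z ∉ q.roots.toFinset) :
    (∀ x ∈ Icc a b, 0 ≤ q.eval x) ∨ (∀ x ∈ Icc a b, q.eval x ≤ 0) := by
  by_contra hcon
  push Not at hcon
  obtain ⟨⟨x, hx, hqx⟩, ⟨y, hy, hqy⟩⟩ := hcon
  have hq0 : q ≠ 0 := by rintro rfl; simp at hqx
  have hivt : (0 : ℝ) ∈ (fun t => q.eval t) '' uIcc x y := by
    refine intermediate_value_uIcc (q.continuous.continuousOn) ?_
    exact mem_uIcc.2 (Or.inl ⟨hqx.le, hqy.le⟩)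
  obtain ⟨z, hz, hqz⟩ := hivt
  simp only at hqz
  have hzx : z ≠ x := by rintro rfl; linarith
  have hzy : z ≠ y := by rintro rfl; linarith
  refine h z ?_ (by simp [hq0, hqz])
  rcases mem_uIcc.1 hz with ⟨h1, h2⟩ | ⟨h1, h2⟩
  · exact ⟨lt_of_le_of_lt hx.1 (lt_of_le_of_ne h1 hzx.symm),
      lt_of_lt_of_le (lt_of_le_of_ne h2 hzy) hy.2⟩
  · exact ⟨lt_of_le_of_lt hy.1 (lt_of_le_of_ne h1 hzy.symm),
      lt_of_lt_of_le (lt_of_le_of_ne h2 hzx) hx.2⟩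

/-- The van der Corput integration by parts on an interval where `|p'| ≥ τ` and `p'` is monotone:
`G'(p) = (G(p))' / p'`, and `1 / p'` is bounded by `1 / τ` and, being monotone, has total variation
at most `2 / τ`. -/
theorem abs_integral_le_of_deriv_ge {p : Polynomial ℝ} {G G' : ℝ → ℝ} {ε τ a b : ℝ}
    (hG : ∀ t, HasDerivAt G (G' t) t) (hG' : Continuous G') (hGε : ∀ t, |G t| ≤ ε)
    (hτ : 0 < τ) (hab : a ≤ b)
    (hp : ∀ x ∈ Icc a b, τ ≤ |p.derivative.eval x|)
    (hpp : (∀ x ∈ Icc a b, 0 ≤ p.derivative.derivative.eval x) ∨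
      (∀ x ∈ Icc a b, p.derivative.derivative.eval x ≤ 0)) :
    |∫ x in a..b, G' (p.eval x)| ≤ 4 * ε / τ := by
  have hGc : Continuous G := continuous_iff_continuousAt.2 fun t => (hG t).continuousAt
  have hε : 0 ≤ ε := (abs_nonneg _).trans (hGε 0)
  have hne : ∀ x ∈ Icc a b, p.derivative.eval x ≠ 0 := fun x hx h0 => by
    have := hp x hx
    rw [h0, abs_zero] at this
    linarith
  -- `w` is the derivative of `-1 / p'`; it has a constant sign
  set w : ℝ → ℝ := fun x => p.derivative.derivative.eval x / (p.derivative.eval x) ^ 2 with hw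
  have hwc : ContinuousOn w (Icc a b) := by
    refine ContinuousOn.div (by fun_prop) (by fun_prop) fun x hx => pow_ne_zero _ (hne x hx)
  have hinv : ∀ x ∈ Icc a b, |(p.derivative.eval x)⁻¹| ≤ 1 / τ := by
    intro x hx
    rw [abs_inv, ← one_div]
    exact one_div_le_one_div_of_le hτ (hp x hx)
  have hinvd : ∀ x ∈ uIcc a b, HasDerivAt (fun x => (p.derivative.eval x)⁻¹) (-w x) x := by
    intro x hx
    rw [uIcc_of_le hab] at hx
    have := (p.derivative.hasDerivAt x).inv (hne x hx)
    rwa [neg_div] at this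
  have hFd : ∀ x ∈ uIcc a b, HasDerivAt (fun x => G (p.eval x) * (p.derivative.eval x)⁻¹)
      (G' (p.eval x) - G (p.eval x) * w x) x := by
    intro x hx
    have h1 := ((hG (p.eval x)).comp x (p.hasDerivAt x)).mul (hinvd x hx)
    rw [uIcc_of_le hab] at hx
    refine HasDerivAt.congr_deriv h1 ?_
    rw [Function.comp_apply, mul_assoc, mul_inv_cancel₀ (hne x hx)]
    ring
  have hwint : IntervalIntegrable w volume a b :=
    ContinuousOn.intervalIntegrable (by rwa [uIcc_of_le hab])
  have hG'int : IntervalIntegrable (fun x => G' (p.eval x)) volume a b :=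
    (hG'.comp p.continuous).intervalIntegrable _ _
  have hGw : IntervalIntegrable (fun x => G (p.eval x) * w x) volume a b :=
    ContinuousOn.intervalIntegrable (by
      rw [uIcc_of_le hab]; exact (hGc.comp p.continuous).continuousOn.mul hwc)
  have e1 := intervalIntegral.integral_eq_sub_of_hasDerivAt hFd (hG'int.sub hGw)
  have e2 := intervalIntegral.integral_eq_sub_of_hasDerivAt hinvd hwint.neg
  rw [intervalIntegral.integral_sub hG'int hGw] at e1
  rw [intervalIntegral.integral_neg] at e2
  have ha := hinv a (left_mem_Icc.2 hab)
  have hb := hinv b (right_mem_Icc.2 hab)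
  have hwbd : |∫ x in a..b, abs (w x)| ≤ 2 * (1 / τ) := by
    have key : |∫ x in a..b, w x| ≤ 2 * (1 / τ) := by
      rw [show ∫ x in a..b, w x = (p.derivative.eval a)⁻¹ - (p.derivative.eval b)⁻¹ by linarith]
      exact (abs_sub _ _).trans (by linarith)
    rcases hpp with h | h
    · rwa [intervalIntegral.integral_congr (g := w)]
      intro x hx
      rw [uIcc_of_le hab] at hx
      exact abs_of_nonneg (div_nonneg (h x hx) (sq_nonneg _))
    · rw [intervalIntegral.integral_congr (g := fun x => - w x), intervalIntegral.integral_neg,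
        abs_neg]
      · exact key
      intro x hx
      rw [uIcc_of_le hab] at hx
      exact abs_of_nonpos (div_nonpos_of_nonpos_of_nonneg (h x hx) (sq_nonneg _))
  have h3 : |∫ x in a..b, G (p.eval x) * w x| ≤ ε * (2 * (1 / τ)) := by
    calc |∫ x in a..b, G (p.eval x) * w x| ≤ ∫ x in a..b, |G (p.eval x) * w x| :=
          intervalIntegral.abs_integral_le_integral_abs hab
      _ ≤ ∫ x in a..b, ε * |w x| := by
          refine intervalIntegral.integral_mono_on hab hGw.abs (hwint.abs.const_mul ε) ?_
          intro x _
          rw [abs_mul]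
          exact mul_le_mul_of_nonneg_right (hGε _) (abs_nonneg _)
      _ = ε * ∫ x in a..b, |w x| := intervalIntegral.integral_const_mul _ _
      _ ≤ ε * (2 * (1 / τ)) := mul_le_mul_of_nonneg_left ((le_abs_self _).trans hwbd) hε
  have hbnd : ∀ x ∈ Icc a b, |G (p.eval x) * (p.derivative.eval x)⁻¹| ≤ ε * (1 / τ) := by
    intro x hx
    rw [abs_mul]
    exact mul_le_mul (hGε _) (hinv x hx) (abs_nonneg _) hε
  have h4 := abs_le.1 (hbnd a (left_mem_Icc.2 hab))
  have h5 := abs_le.1 (hbnd b (right_mem_Icc.2 hab))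
  have h6 := abs_le.1 h3
  rw [show 4 * ε / τ = 4 * (ε * (1 / τ)) by ring]
  exact abs_le.2 ⟨by linarith, by linarith⟩

/-- Cutting `[a, b]` at the points of `S` makes `p''` of constant sign and `|p'|` either `≥ τ` or `≤ τ`
throughout each piece. Pieces of the first kind contribute at most `4 ε / τ` each by integration by
parts, those of the second kind at most their length. The induction is on a bound `N` for the
number of cuts. -/
theorem abs_integral_le_induct {p : Polynomial ℝ} {G G' : ℝ → ℝ} {ε τ : ℝ}
    (hG : ∀ t, HasDerivAt G (G' t) t) (hG' : Continuous G') (hGε : ∀ t, |G t| ≤ ε)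
    (hG1 : ∀ t, |G' t| ≤ 1) (hτ : 0 < τ) (S : Finset ℝ)
    (hS : p.derivative.derivative.roots.toFinset ∪
      (p.derivative ^ 2 - Polynomial.C (τ ^ 2)).roots.toFinset ⊆ S) (N : ℕ) :
    ∀ a b : ℝ, a ≤ b → (S.filter (fun z => z ∈ Ioo a b)).card ≤ N →
    |∫ x in a..b, G' (p.eval x)| ≤
      (∫ x in a..b, indicator {x | |p.derivative.eval x| ≤ τ} 1 x) + (N + 1) * (4 * ε / τ) := by
  have hε : 0 ≤ ε := (abs_nonneg _).trans (hGε 0)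
  have hc : 0 ≤ 4 * ε / τ := by positivity
  have hEm : MeasurableSet {x | |p.derivative.eval x| ≤ τ} :=
    (isClosed_le (by fun_prop) (by fun_prop)).measurableSet
  have hint : ∀ a b : ℝ, IntervalIntegrable
      (indicator {x | |p.derivative.eval x| ≤ τ} (1 : ℝ → ℝ)) volume a b := by
    intro a b
    refine (intervalIntegrable_const (c := (1 : ℝ))).mono_fun
      ((measurable_one.indicator hEm).aestronglyMeasurable) (ae_of_all _ fun x => ?_)
    by_cases hx : x ∈ {x | |p.derivative.eval x| ≤ τ} <;> simp [indicator, hx]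
  have hind0 : ∀ a b : ℝ, a ≤ b →
      0 ≤ ∫ x in a..b, indicator {x | |p.derivative.eval x| ≤ τ} (1 : ℝ → ℝ) x := fun a b hab =>
    intervalIntegral.integral_nonneg hab fun x _ => indicator_nonneg (fun _ _ => zero_le_one) _
  have hGint : ∀ a b : ℝ, IntervalIntegrable (fun x => G' (p.eval x)) volume a b := fun a b =>
    (hG'.comp p.continuous).intervalIntegrable _ _
  induction N using Nat.strong_induction_on with
  | _ N ih =>
  intro a b hab hcard
  by_cases hex : ∃ z ∈ S, z ∈ Ioo a b
  · obtain ⟨z, hzS, hz⟩ := hex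
    set N1 := (S.filter (fun w => w ∈ Ioo a z)).card with hN1
    set N2 := (S.filter (fun w => w ∈ Ioo z b)).card with hN2
    have hlt : N1 + N2 + 1 ≤ N := by
      refine le_trans ?_ hcard
      have hd1 : Disjoint (S.filter (fun w => w ∈ Ioo a z)) (S.filter (fun w => w ∈ Ioo z b)) := by
        rw [Finset.disjoint_left]
        intro w h1 h2
        simp only [Finset.mem_filter, mem_Ioo] at h1 h2
        linarith [h1.2.2, h2.2.1]
      rw [hN1, hN2, ← Finset.card_union_of_disjoint hd1, ← Finset.card_insert_of_notMem (a := z) (by simp)]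
      · refine Finset.card_le_card ?_
        intro w hw
        simp only [Finset.mem_insert, Finset.mem_union, Finset.mem_filter, mem_Ioo] at hw ⊢
        obtain ⟨hz1, hz2⟩ := hz
        rcases hw with rfl | ⟨h1, h2, h3⟩ | ⟨h1, h2, h3⟩
        · exact ⟨hzS, hz1, hz2⟩
        · exact ⟨h1, h2, h3.trans hz2⟩
        · exact ⟨h1, hz1.trans h2, h3⟩
    have i1 := ih N1 (by omega) a z hz.1.le le_rfl
    have i2 := ih N2 (by omega) z b hz.2.le le_rfl
    rw [← intervalIntegral.integral_add_adjacent_intervals (hGint a z) (hGint z b),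
      ← intervalIntegral.integral_add_adjacent_intervals (hint a z) (hint z b)]
    refine (abs_add_le _ _).trans ?_
    have : ((N1 : ℝ) + 1 + (N2 + 1)) * (4 * ε / τ) ≤ (N + 1) * (4 * ε / τ) := by
      refine mul_le_mul_of_nonneg_right ?_ hc
      have : (N1 : ℝ) + N2 + 1 ≤ N := by exact_mod_cast hlt
      linarith
    linarith
  · push Not at hex
    have hno : ∀ q : Polynomial ℝ, q.roots.toFinset ⊆ S → ∀ z ∈ Ioo a b, z ∉ q.roots.toFinset :=
      fun q hq z hz hzq => hex z (hq hzq) hz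
    have h2 := eval_sign_of_no_roots (hno _ (Finset.union_subset_right hS))
    have h1 := eval_sign_of_no_roots (hno _ (Finset.union_subset_left hS))
    have hN : (1 : ℝ) * (4 * ε / τ) ≤ (N + 1) * (4 * ε / τ) := by
      gcongr
      linarith [(N.cast_nonneg : (0 : ℝ) ≤ N)]
    rcases h2 with h2 | h2
    · have := abs_integral_le_of_deriv_ge hG hG' hGε hτ hab (p := p) (fun x hx => by
        have := h2 x hx
        simp only [Polynomial.eval_sub, Polynomial.eval_pow, Polynomial.eval_C] at this
        rw [← abs_of_pos hτ]
        exact sq_le_sq.1 (by linarith)) h1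
      linarith [hind0 a b hab]
    · have hle : ∀ x ∈ Icc a b, |p.derivative.eval x| ≤ τ := fun x hx => by
        have := h2 x hx
        simp only [Polynomial.eval_sub, Polynomial.eval_pow, Polynomial.eval_C] at this
        rw [← abs_of_pos hτ]
        exact sq_le_sq.1 (by linarith)
      have : |∫ x in a..b, G' (p.eval x)| ≤
          ∫ x in a..b, indicator {x | |p.derivative.eval x| ≤ τ} (1 : ℝ → ℝ) x := by
        refine (intervalIntegral.abs_integral_le_integral_abs hab).trans ?_
        refine intervalIntegral.integral_mono_on hab (hGint a b).abs (hint a b) fun x hx => ?_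
        rw [indicator_of_mem (show x ∈ {x | |p.derivative.eval x| ≤ τ} from hle x hx)]
        exact hG1 _
      nlinarith

/-- One-dimensional estimate: if `p` of degree at most `d` oscillates by `M` on an interval of
length `L`, then `∫ G'(p)` over any subinterval is at most an absolute constant times
`L (ε / M) ^ (1 / d)`. By the Remez-type inequality for `p'` and the mean value theorem, `|p'|` is
small only on a short set; off it one integrates by parts. -/
theorem abs_integral_le_osc {p : Polynomial ℝ} {d : ℕ} (hd : 0 < d) (hp : p.natDegree ≤ d)
    {G G' : ℝ → ℝ} {ε : ℝ} (hε : 0 < ε)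
    (hG : ∀ t, HasDerivAt G (G' t) t) (hG' : Continuous G') (hGε : ∀ t, |G t| ≤ ε)
    (hG1 : ∀ t, |G' t| ≤ 1) {a b u v M : ℝ} (hM : 0 < M)
    (hu : u ∈ Icc a b) (hv : v ∈ Icc a b) (huv : M ≤ |p.eval u - p.eval v|)
    {a' b' : ℝ} (ha' : a ≤ a') (hab' : a' ≤ b') (hb' : b' ≤ b) :
    |∫ x in a'..b', G' (p.eval x)| ≤ 190 * (b - a) * (ε / M) ^ (1 / (d : ℝ)) := by
  obtain ⟨k, rfl⟩ : ∃ k, d = k + 1 := ⟨d - 1, by omega⟩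
  have hab : a < b := by
    rcases (hu.1.trans hu.2).eq_or_lt with h | h
    · exfalso
      have h1 : u = a := le_antisymm (h ▸ hu.2) hu.1
      have h2 : v = a := le_antisymm (h ▸ hv.2) hv.1
      rw [h1, h2, sub_self, abs_zero] at huv
      linarith
    · exact h
  set L := b - a with hL
  have hLpos : 0 < L := by linarith
  set η := ε / M with hη
  have hηpos : 0 < η := by positivity
  set D : ℝ := ((k + 1 : ℕ) : ℝ) with hD
  have hDpos : 0 < D := by rw [hD]; positivity
  -- `x ^ d = d η`; the set where `p'` is small is measured against `x L`
  set x : ℝ := (D * η) ^ (1 / D) with hx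
  have hxpos : 0 < x := by positivity
  have hxpow : x ^ (k + 1) = D * η := by
    rw [hx, ← Real.rpow_natCast, ← Real.rpow_mul (by positivity), ← hD, one_div,
      inv_mul_cancel₀ hDpos.ne', Real.rpow_one]
  set e := Real.exp 1 with he
  have hepos : 0 < e := Real.exp_pos 1
  set τ := x ^ k * M / (2 * e * L) with hτ
  have hτpos : 0 < τ := by positivity
  have hEsub : {x | |p.derivative.eval x| ≤ τ} ∩ Icc a b ⊆ Icc a b := inter_subset_right
  have hEvol : volume ({x | |p.derivative.eval x| ≤ τ} ∩ Icc a b) ≤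
      ENNReal.ofReal (2 * e * L * x) := by
    by_contra hcon
    rw [not_le] at hcon
    have hδ : 0 < 2 * e * L * x / D := by positivity
    have hvol : ENNReal.ofReal (k * (2 * e * L * x / D)) <
        volume ({x | |p.derivative.eval x| ≤ τ} ∩ Icc a b) := by
      refine lt_of_le_of_lt (ENNReal.ofReal_le_ofReal ?_) hcon
      rw [mul_div_assoc', div_le_iff₀ hDpos, mul_comm]
      gcongr
      rw [hD]; push_cast; linarith
    have hdeg : p.derivative.natDegree ≤ k := by
      have := Polynomial.natDegree_derivative_le p
      omega
    have hbd : ∀ y ∈ Icc a b, |p.derivative.eval y| ≤ M / (2 * L) := by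
      intro y hy
      have h1 := abs_eval_le_of_small_on hdeg hδ hEsub (fun z hz => hz.1) hvol hy
      refine h1.trans ?_
      have hfac : D ^ k / k.factorial ≤ e ^ (k + 1) := by
        have h2 := Real.pow_div_factorial_le_exp D hDpos.le (k + 1)
        rw [Nat.factorial_succ] at h2
        have h3 : Real.exp D = e ^ (k + 1) := by
          rw [he, ← Real.exp_nat_mul, mul_one]
        rw [← h3]
        refine le_trans (le_of_eq ?_) h2
        push_cast
        have hDk : (k : ℝ) + 1 = D := by rw [hD]; push_cast; rfl
        rw [hDk, pow_succ]
        field_simp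
      have h4 : (2 * (b - a) / (2 * e * L * x / D)) ^ k = D ^ k / (e ^ k * x ^ k) := by
        rw [← hL, ← mul_pow, ← div_pow]
        congr 1
        field_simp
      rw [h4, hτ]
      calc x ^ k * M / (2 * e * L) * (D ^ k / (e ^ k * x ^ k) / k.factorial)
          = (M / (2 * L)) * ((D ^ k / k.factorial) / e ^ (k + 1)) := by
            rw [pow_succ]; field_simp
        _ ≤ (M / (2 * L)) * 1 := by
            gcongr
            exact (div_le_one (by positivity)).2 hfac
        _ = _ := mul_one _
    have hmv := Convex.norm_image_sub_le_of_norm_hasDerivWithin_le (f := fun x => p.eval x)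
      (f' := fun x => p.derivative.eval x) (C := M / (2 * L))
      (fun y _ => (p.hasDerivAt y).hasDerivWithinAt) (fun y hy => by
        rw [Real.norm_eq_abs]; exact hbd y hy) (convex_Icc a b) hv hu
    rw [Real.norm_eq_abs, Real.norm_eq_abs] at hmv
    have huvL : |u - v| ≤ L := abs_le.2 ⟨by linarith [hu.1, hv.2], by linarith [hu.2, hv.1]⟩
    have : M ≤ M / (2 * L) * L := huv.trans (hmv.trans (by gcongr))
    have h7 : M / (2 * L) * L = M / 2 := by field_simp
    linarith
  -- the roots of `p''` and of `p' ^ 2 - τ ^ 2` cut the interval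
  set S := p.derivative.derivative.roots.toFinset ∪
      (p.derivative ^ 2 - Polynomial.C (τ ^ 2)).roots.toFinset with hS
  have hScard : S.card ≤ 3 * k := by
    have hd1 : p.derivative.natDegree ≤ k := by
      have := Polynomial.natDegree_derivative_le p
      omega
    have hd2 : p.derivative.derivative.natDegree ≤ k :=
      (Polynomial.natDegree_derivative_le _).trans (by omega)
    have hd3 : (p.derivative ^ 2 - Polynomial.C (τ ^ 2)).natDegree ≤ 2 * k := by
      rw [Polynomial.natDegree_sub_C]
      exact Polynomial.natDegree_pow_le.trans (by omega)
    have c1 := (Multiset.toFinset_card_le p.derivative.derivative.roots).trans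
      (Polynomial.card_roots' _)
    have c2 := (Multiset.toFinset_card_le
      (p.derivative ^ 2 - Polynomial.C (τ ^ 2)).roots).trans (Polynomial.card_roots' _)
    have := Finset.card_union_le p.derivative.derivative.roots.toFinset
      (p.derivative ^ 2 - Polynomial.C (τ ^ 2)).roots.toFinset
    rw [hS]
    omega
  have hmain := abs_integral_le_induct hG hG' hGε hG1 hτpos S subset_rfl (3 * k) a' b' hab'
    ((Finset.card_filter_le _ _).trans hScard)
  have hEm : MeasurableSet {x | |p.derivative.eval x| ≤ τ} :=
    (isClosed_le (by fun_prop) (by fun_prop)).measurableSet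
  have hind : (∫ x in a'..b', indicator {x | |p.derivative.eval x| ≤ τ} (1 : ℝ → ℝ) x) ≤
      2 * e * L * x := by
    rw [intervalIntegral.integral_of_le hab', integral_indicator_one hEm, Measure.real,
      Measure.restrict_apply hEm]
    refine ENNReal.toReal_le_of_le_ofReal (by positivity) (le_trans (measure_mono ?_) hEvol)
    exact inter_subset_inter_right _ (fun y hy => ⟨by linarith [hy.1], by linarith [hy.2]⟩)
  have h8 : (((3 * k : ℕ) : ℝ) + 1) * (4 * ε / τ) ≤ 32 * e * L * x := by
    have e1 : 4 * ε / τ = 8 * e * L * (x / D) := by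
      have : ε = x * x ^ k / D * M := by
        rw [← pow_succ', hxpow, hη]; field_simp
      rw [hτ, this]
      field_simp
      ring
    rw [e1]
    have : ((3 * k : ℕ) : ℝ) + 1 ≤ 4 * D := by rw [hD]; push_cast; nlinarith [(k.cast_nonneg : (0 : ℝ) ≤ k)]
    calc (((3 * k : ℕ) : ℝ) + 1) * (8 * e * L * (x / D)) ≤ 4 * D * (8 * e * L * (x / D)) := by
          gcongr
      _ = 32 * e * L * x := by field_simp; ring
  have hx2 : x ≤ 2 * η ^ (1 / D) := by
    rw [hx, Real.mul_rpow hDpos.le hηpos.le]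
    gcongr
    rw [one_div, Real.rpow_inv_le_iff_of_pos hDpos.le (by norm_num) hDpos, hD, Real.rpow_natCast]
    exact_mod_cast Nat.lt_two_pow_self.le
  have he3 : e ≤ 2.7183 := Real.exp_one_lt_d9.le.trans (by norm_num)
  have h9 : 34 * e * L * x ≤ 190 * L * η ^ (1 / D) := by
    have : 34 * e ≤ 95 := by linarith
    calc 34 * e * L * x ≤ 95 * L * (2 * η ^ (1 / D)) := by gcongr
      _ = _ := by ring
  linarith

end

/-! ### The Prékopa–Leindler and Brunn–Minkowski inequalities -/

section

open Set Filter Topology Pointwise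

/-- The Minkowski combination `l A + (1 - l) B`. -/
def comb {E : Type*} [AddCommGroup E] [Module ℝ E] (l : ℝ) (A B : Set E) : Set E :=
  (fun p : E × E => l • p.1 + (1 - l) • p.2) '' (A ×ˢ B)

theorem IsCompact.comb {E : Type*} [AddCommGroup E] [Module ℝ E] [TopologicalSpace E]
    [ContinuousAdd E] [ContinuousSMul ℝ E] {l : ℝ} {A B : Set E} (hA : IsCompact A)
    (hB : IsCompact B) : IsCompact (comb l A B) :=
  (hA.prod hB).image (by fun_prop)

theorem mem_comb {E : Type*} [AddCommGroup E] [Module ℝ E] {l : ℝ} {A B : Set E} {x y : E}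
    (hx : x ∈ A) (hy : y ∈ B) : l • x + (1 - l) • y ∈ comb l A B :=
  ⟨(x, y), ⟨hx, hy⟩, rfl⟩

/-- The one-dimensional Brunn–Minkowski inequality for compact sets. The two translates
`l A + (1 - l) min B` and `l max A + (1 - l) B` meet in one point only. -/
theorem volume_comb_compact {A B S : Set ℝ} (hA : IsCompact A) (hB : IsCompact B)
    (hA0 : A.Nonempty) (hB0 : B.Nonempty) {l : ℝ} (hl : 0 < l) (hl1 : l < 1)
    (hS : ∀ x ∈ A, ∀ y ∈ B, l * x + (1 - l) * y ∈ S) :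
    ENNReal.ofReal l * volume A + ENNReal.ofReal (1 - l) * volume B ≤ volume S := by
  obtain ⟨a, haA, ha⟩ := hA.exists_isGreatest hA0
  obtain ⟨b, hbB, hb⟩ := hB.exists_isLeast hB0
  have key : ∀ (k c : ℝ) (T : Set ℝ), 0 < k →
      volume ((fun x => k * x + c) '' T) = ENNReal.ofReal k * volume T := by
    intro k c T hk
    have : (fun x => k * x + c) '' T = (fun x => x + c) '' (k • T) := by
      rw [← image_smul, image_image]; simp
    rw [this, image_add_right, measure_preimage_add_right, Measure.addHaar_smul]
    simp [abs_of_pos hk]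
  have hl1' : 0 < 1 - l := by linarith
  rw [← key l ((1 - l) * b) A hl, ← key (1 - l) (l * a) B hl1']
  rw [← measure_union₀]
  · refine measure_mono (union_subset ?_ ?_)
    · rintro _ ⟨x, hx, rfl⟩
      exact hS x hx b hbB
    · rintro _ ⟨x, hx, rfl⟩
      simp only
      rw [add_comm]
      exact hS a haA x hx
  · exact ((hB.image (by fun_prop)).measurableSet).nullMeasurableSet
  · refine measure_mono_null (t := {l * a + (1 - l) * b}) ?_ (by simp)
    rintro z ⟨⟨x, hx, rfl⟩, ⟨y, hy, h⟩⟩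
    simp only at h
    have h1 := ha hx
    have h2 := hb hy
    have h3 := mul_le_mul_of_nonneg_left h1 hl.le
    have h4 := mul_le_mul_of_nonneg_left h2 hl1'.le
    simp only [mem_singleton_iff]
    linarith

/-- The one-dimensional Brunn–Minkowski inequality for measurable sets, by inner regularity. The set `S`
containing the Minkowski combination need not be measurable. -/
theorem volume_comb_measurable {A B S : Set ℝ} (hA : MeasurableSet A) (hB : MeasurableSet B)
    (hA0 : A.Nonempty) (hB0 : B.Nonempty) {l : ℝ} (hl : 0 < l) (hl1 : l < 1)
    (hS : ∀ x ∈ A, ∀ y ∈ B, l * x + (1 - l) * y ∈ S) :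
    ENNReal.ofReal l * volume A + ENNReal.ofReal (1 - l) * volume B ≤ volume S := by
  obtain ⟨a, ha⟩ := hA0
  obtain ⟨b, hb⟩ := hB0
  rw [hA.measure_eq_iSup_isCompact, hB.measure_eq_iSup_isCompact]
  simp only [ENNReal.mul_iSup, iSup_and']
  refine ENNReal.biSup_add_biSup_le' ⟨∅, empty_subset _, isCompact_empty⟩
    ⟨∅, empty_subset _, isCompact_empty⟩ fun K hK L hL => ?_
  refine le_trans ?_ (volume_comb_compact (hK.2.insert a) (hL.2.insert b)
    (insert_nonempty _ _) (insert_nonempty _ _) hl hl1 fun x hx y hy =>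
      hS x (insert_subset ha hK.1 hx) y (insert_subset hb hL.1 hy))
  gcongr <;> exact subset_insert _ _

/-- The one-dimensional Prékopa–Leindler inequality for bounded functions. After both suprema are
normalized to `1`, the level sets of `f` and `g` are nonempty for the same levels, so the
one-dimensional Brunn–Minkowski inequality applies to them; integrate over the levels and use the
inequality between the arithmetic and the geometric mean. -/
theorem prekopa_leindler_one {f g h : ℝ → ℝ} {a b l : ℝ} (hf : Measurable f) (hg : Measurable g)
    (hf0 : ∀ x, 0 ≤ f x) (hg0 : ∀ x, 0 ≤ g x) (hh0 : ∀ x, 0 ≤ h x)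
    (hfi : Integrable f) (hgi : Integrable g) (hhi : Integrable h)
    (ha : 0 < a) (hb : 0 < b) (hfa : IsLUB (range f) a) (hgb : IsLUB (range g) b)
    (hl : 0 < l) (hl1 : l < 1)
    (H : ∀ x y, f x ^ l * g y ^ (1 - l) ≤ h (l * x + (1 - l) * y)) :
    (∫ x, f x) ^ l * (∫ x, g x) ^ (1 - l) ≤ ∫ x, h x := by
  have hl1' : 0 < 1 - l := by linarith
  set c := a ^ l * b ^ (1 - l) with hc
  have hcpos : 0 < c := by positivity
  have hlev : ∀ t : ℝ, 0 < t → ENNReal.ofReal l * volume {x | t < f x / a} +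
      ENNReal.ofReal (1 - l) * volume {x | t < g x / b} ≤ volume {x | t < h x / c} := by
    intro t ht
    rcases lt_or_ge t 1 with h1 | h1
    · refine volume_comb_measurable (measurableSet_lt measurable_const (hf.div_const a))
        (measurableSet_lt measurable_const (hg.div_const b)) ?_ ?_ hl hl1 ?_
      · obtain ⟨_, ⟨x, rfl⟩, hx⟩ := (lt_isLUB_iff hfa).1 (show t * a < a by nlinarith)
        exact ⟨x, (lt_div_iff₀ ha).2 hx⟩
      · obtain ⟨_, ⟨x, rfl⟩, hx⟩ := (lt_isLUB_iff hgb).1 (show t * b < b by nlinarith)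
        exact ⟨x, (lt_div_iff₀ hb).2 hx⟩
      · intro x hx y hy
        simp only [mem_ofPred_eq] at hx hy ⊢
        rw [lt_div_iff₀ ha] at hx
        rw [lt_div_iff₀ hb] at hy
        rw [lt_div_iff₀ hcpos]
        refine lt_of_lt_of_le ?_ (H x y)
        calc t * c = (t * a) ^ l * (t * b) ^ (1 - l) := by
              rw [Real.mul_rpow ht.le ha.le, Real.mul_rpow ht.le hb.le, hc]
              have : t ^ l * t ^ (1 - l) = t := by
                rw [← Real.rpow_add ht]; simp
              calc t * (a ^ l * b ^ (1 - l)) = (t ^ l * t ^ (1 - l)) * (a ^ l * b ^ (1 - l)) := by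
                    rw [this]
                _ = _ := by ring
          _ < _ := by
              refine mul_lt_mul (Real.rpow_lt_rpow (by positivity) hx hl)
                (Real.rpow_le_rpow (by positivity) hy.le hl1'.le) (by positivity)
                (Real.rpow_nonneg (hf0 x) _)
    · -- both level sets on the left are empty at levels `t ≥ 1`
      have e1 : {x | t < f x / a} = ∅ := by
        ext x
        simp only [mem_ofPred_eq, mem_empty_iff_false, iff_false, not_lt]
        exact ((div_le_one ha).2 (hfa.1 ⟨x, rfl⟩)).trans h1
      have e2 : {x | t < g x / b} = ∅ := by
        ext x
        simp only [mem_ofPred_eq, mem_empty_iff_false, iff_false, not_lt]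
        exact ((div_le_one hb).2 (hgb.1 ⟨x, rfl⟩)).trans h1
      simp [e1, e2]
  have layer : ∀ (u : ℝ → ℝ) (s : ℝ), 0 < s → (∀ x, 0 ≤ u x) → Integrable u →
      ENNReal.ofReal ((∫ x, u x) / s) = ∫⁻ t in Ioi 0, volume {x | t < u x / s} := by
    intro u s hs hu hui
    rw [← lintegral_eq_lintegral_meas_lt volume (ae_of_all _ fun x => div_nonneg (hu x) hs.le)
      (hui.1.aemeasurable.div_const s), ← integral_div,
      ofReal_integral_eq_lintegral_ofReal (hui.div_const s)
      (ae_of_all _ fun x => div_nonneg (hu x) hs.le)]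
  have hI : ENNReal.ofReal l * ENNReal.ofReal ((∫ x, f x) / a) +
      ENNReal.ofReal (1 - l) * ENNReal.ofReal ((∫ x, g x) / b) ≤
      ENNReal.ofReal ((∫ x, h x) / c) := by
    rw [layer f a ha hf0 hfi, layer g b hb hg0 hgi, layer h c hcpos hh0 hhi]
    rw [← lintegral_const_mul' _ _ ENNReal.ofReal_ne_top,
      ← lintegral_const_mul' _ _ ENNReal.ofReal_ne_top]
    refine (le_lintegral_add _ _).trans ?_
    exact setLIntegral_mono' measurableSet_Ioi hlev
  have hF : 0 ≤ ∫ x, f x := integral_nonneg hf0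
  have hG : 0 ≤ ∫ x, g x := integral_nonneg hg0
  have hH : 0 ≤ ∫ x, h x := integral_nonneg hh0
  rw [← ENNReal.ofReal_mul hl.le, ← ENNReal.ofReal_mul hl1'.le, ← ENNReal.ofReal_add
    (by positivity) (by positivity), ENNReal.ofReal_le_ofReal_iff (by positivity)] at hI
  have hAM := Real.geom_mean_le_arith_mean2_weighted hl.le hl1'.le
    (div_nonneg hF ha.le) (div_nonneg hG hb.le) (by ring)
  have := hAM.trans hI
  rw [Real.div_rpow hF ha.le, Real.div_rpow hG hb.le, div_mul_div_comm,
    div_le_div_iff_of_pos_right hcpos] at this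
  exact this

theorem piFinSuccAbove_symm_eq_cons {n : ℕ} (x : ℝ) (y : Fin n → ℝ) :
    (MeasurableEquiv.piFinSuccAbove (fun _ : Fin (n + 1) => ℝ) 0).symm (x, y) = Fin.cons x y := by
  simp [MeasurableEquiv.piFinSuccAbove_symm_apply, Fin.consEquiv]

theorem volume_eq_lintegral_slice {n : ℕ} {A : Set (Fin (n + 1) → ℝ)} (hA : MeasurableSet A) :
    volume A = ∫⁻ x : ℝ, volume {y : Fin n → ℝ | (Fin.cons x y : Fin (n + 1) → ℝ) ∈ A} := by
  have e := (volume_preserving_piFinSuccAbove (fun _ : Fin (n + 1) => ℝ) 0).symm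
  rw [← e.measure_preimage hA.nullMeasurableSet, Measure.volume_eq_prod,
    Measure.prod_apply (e.measurable hA)]
  refine lintegral_congr fun x => ?_
  congr 1
  ext y
  simp only [mem_preimage, piFinSuccAbove_symm_eq_cons, mem_ofPred_eq]

/-- The multiplicative form of the Brunn–Minkowski inequality. The induction on the dimension
applies the Prékopa–Leindler inequality to the volumes of the slices orthogonal to the first
axis. -/
theorem brunn_minkowski_mul (n : ℕ) : ∀ (A B : Set (Fin n → ℝ)), IsCompact A → IsCompact B →
    ∀ l : ℝ, 0 < l → l < 1 →
    volume.real A ^ l * volume.real B ^ (1 - l) ≤ volume.real (comb l A B) := by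
  induction n with
  | zero =>
    intro A B hA hB l hl hl1
    have hl1' : 0 < 1 - l := by linarith
    rcases A.eq_empty_or_nonempty with rfl | hA0
    · simp [Real.zero_rpow hl.ne']
    rcases B.eq_empty_or_nonempty with rfl | hB0
    · simp [Real.zero_rpow hl1'.ne']
    have h1 : ∀ S : Set (Fin 0 → ℝ), S.Nonempty → volume.real S = 1 := by
      intro S hS
      rw [Subsingleton.eq_univ_of_nonempty hS]
      simp [Measure.real, volume_pi]
    rw [h1 A hA0, h1 B hB0, h1 (comb l A B) ((hA0.prod hB0).image _)]
    simp
  | succ n ih =>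
    intro A B hA hB l hl hl1
    have hl1' : 0 < 1 - l := by linarith
    -- the function recording the volumes of the slices
    set V : Set (Fin (n + 1) → ℝ) → ℝ → ℝ := fun S x =>
      volume.real {y : Fin n → ℝ | (Fin.cons x y : Fin (n + 1) → ℝ) ∈ S} with hV
    have hV0 : ∀ S x, 0 ≤ V S x := fun S x => measureReal_nonneg
    have hcont : ∀ x : ℝ, Continuous fun y : Fin n → ℝ => (Fin.cons x y : Fin (n + 1) → ℝ) :=
      fun x => by fun_prop
    have hsub : ∀ S x, {y : Fin n → ℝ | (Fin.cons x y : Fin (n + 1) → ℝ) ∈ S} ⊆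
        (fun z : Fin (n + 1) → ℝ => Fin.tail z) '' S := fun S x y hy => ⟨_, hy, by simp⟩
    have htail : Continuous fun z : Fin (n + 1) → ℝ => (Fin.tail z : Fin n → ℝ) := by
      unfold Fin.tail; fun_prop
    have hSc : ∀ S, IsCompact S → ∀ x,
        IsCompact {y : Fin n → ℝ | (Fin.cons x y : Fin (n + 1) → ℝ) ∈ S} := fun S hS x =>
      (hS.image htail).of_isClosed_subset (hS.isClosed.preimage (hcont x)) (hsub S x)
    have hVm : ∀ S, IsCompact S → Measurable (V S) := by
      intro S hS
      have e := (volume_preserving_piFinSuccAbove (fun _ : Fin (n + 1) => ℝ) 0).symm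
      have := (measurable_measure_prodMk_left (ν := (volume : Measure (Fin n → ℝ)))
        (e.measurable hS.measurableSet)).ennreal_toReal
      suffices heq : V S = fun x => (volume (Prod.mk x ⁻¹'
          ((MeasurableEquiv.piFinSuccAbove (fun _ : Fin (n + 1) => ℝ) 0).symm ⁻¹' S))).toReal by
        rw [heq]; exact this
      funext x
      refine congrArg ENNReal.toReal (congrArg _ ?_)
      ext y
      simp only [mem_preimage, piFinSuccAbove_symm_eq_cons, mem_ofPred_eq]
    have hVbd : ∀ S, IsCompact S → BddAbove (range (V S)) := by
      intro S hS
      refine ⟨volume.real ((fun z : Fin (n + 1) → ℝ => (Fin.tail z : Fin n → ℝ)) '' S), ?_⟩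
      rintro _ ⟨x, rfl⟩
      exact measureReal_mono (hsub S x) (hS.image htail).measure_lt_top.ne
    have hlin : ∀ S, IsCompact S → ∫⁻ x, ENNReal.ofReal (V S x) = volume S := by
      intro S hS
      rw [volume_eq_lintegral_slice hS.measurableSet]
      refine lintegral_congr fun x => ?_
      exact ENNReal.ofReal_toReal (hSc S hS x).measure_lt_top.ne
    have hVi : ∀ S, IsCompact S → Integrable (V S) := by
      intro S hS
      refine ⟨(hVm S hS).aestronglyMeasurable, ?_⟩
      rw [hasFiniteIntegral_iff_ofReal (ae_of_all _ (hV0 S)), hlin S hS]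
      exact hS.measure_lt_top
    have hint : ∀ S, IsCompact S → ∫ x, V S x = volume.real S := by
      intro S hS
      rw [integral_eq_lintegral_of_nonneg_ae (ae_of_all _ (hV0 S)) (hVi S hS).1, hlin S hS]
      rfl
    have hlub : ∀ S, IsCompact S → 0 < volume.real S →
        ∃ a, 0 < a ∧ IsLUB (range (V S)) a := by
      intro S hS hpos
      refine ⟨_, ?_, isLUB_csSup (range_nonempty _) (hVbd S hS)⟩
      by_contra hcon
      have : ∀ x, V S x = 0 := fun x => le_antisymm
        ((le_csSup (hVbd S hS) ⟨x, rfl⟩).trans (not_lt.1 hcon)) (hV0 S x)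
      rw [← hint S hS] at hpos
      simp [this] at hpos
    rcases (measureReal_nonneg (μ := volume) (s := A)).eq_or_lt with h0 | hApos
    · rw [← h0, Real.zero_rpow hl.ne', zero_mul]; exact measureReal_nonneg
    rcases (measureReal_nonneg (μ := volume) (s := B)).eq_or_lt with h0 | hBpos
    · rw [← h0, Real.zero_rpow hl1'.ne', mul_zero]; exact measureReal_nonneg
    obtain ⟨a, ha, haA⟩ := hlub A hA hApos
    obtain ⟨b, hb, hbB⟩ := hlub B hB hBpos
    have hC : IsCompact (comb l A B) := hA.comb hB
    rw [← hint A hA, ← hint B hB, ← hint _ hC]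
    refine prekopa_leindler_one (hVm A hA) (hVm B hB) (hV0 A) (hV0 B) (hV0 _) (hVi A hA)
      (hVi B hB) (hVi _ hC) ha hb haA hbB hl hl1 fun x y => ?_
    refine (ih _ _ (hSc A hA x) (hSc B hB y) l hl hl1).trans ?_
    refine measureReal_mono ?_ (hSc _ hC _).measure_lt_top.ne
    rintro _ ⟨⟨u, v⟩, ⟨hu, hv⟩, rfl⟩
    have hu' : (Fin.cons x u : Fin (n + 1) → ℝ) ∈ A := hu
    have hv' : (Fin.cons y v : Fin (n + 1) → ℝ) ∈ B := hv
    simp only [mem_ofPred_eq]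
    convert mem_comb (l := l) hu' hv' using 1
    ext i
    refine Fin.cases ?_ (fun j => ?_) i <;> simp

/-- The additive form of the Brunn–Minkowski inequality, deduced from the multiplicative one by
rescaling both sets to volume at least `1`. -/
theorem brunn_minkowski_add {n : ℕ} {A B : Set (Fin n → ℝ)} (hA : IsCompact A) (hB : IsCompact B)
    {l α β : ℝ} (hl : 0 < l) (hl1 : l < 1) (hα : 0 < α) (hβ : 0 < β)
    (hαA : α ^ n ≤ volume.real A) (hβB : β ^ n ≤ volume.real B) :
    (l * α + (1 - l) * β) ^ n ≤ volume.real (comb l A B) := by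
  have hl1' : 0 < 1 - l := by linarith
  set s := l * α + (1 - l) * β with hs
  have hspos : 0 < s := by positivity
  have hscale : ∀ (r : ℝ) (S : Set (Fin n → ℝ)), 0 < r →
      volume.real (r • S) = r ^ n * volume.real S := by
    intro r S hr
    rw [Measure.real, Measure.addHaar_smul, ENNReal.toReal_mul]
    simp [abs_of_pos hr, Measure.real, hr.le]
  have h1 : 1 ≤ volume.real (α⁻¹ • A) := by
    rw [hscale _ _ (inv_pos.2 hα), inv_pow, ← div_eq_inv_mul, one_le_div (by positivity)]
    exact hαA
  have h2 : 1 ≤ volume.real (β⁻¹ • B) := by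
    rw [hscale _ _ (inv_pos.2 hβ), inv_pow, ← div_eq_inv_mul, one_le_div (by positivity)]
    exact hβB
  have ht : 0 < l * α / s := by positivity
  have ht2 : 1 - l * α / s = (1 - l) * β / s := by
    rw [eq_div_iff hspos.ne', sub_mul, div_mul_cancel₀ _ hspos.ne']; linarith
  have ht1 : l * α / s < 1 := by
    have : 0 < 1 - l * α / s := by rw [ht2]; positivity
    linarith
  have h3 := brunn_minkowski_mul n _ _ (hA.smul α⁻¹) (hB.smul β⁻¹) _ ht ht1
  have h4 : s • comb (l * α / s) (α⁻¹ • A) (β⁻¹ • B) ⊆ comb l A B := by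
    rintro _ ⟨_, ⟨⟨_, _⟩, ⟨⟨u, hu, rfl⟩, ⟨v, hv, rfl⟩⟩, rfl⟩, rfl⟩
    convert mem_comb (l := l) hu hv using 1
    simp only [ht2, smul_add, smul_smul]
    congr 2 <;> field_simp
  have h5 : (1 : ℝ) ≤ volume.real (α⁻¹ • A) ^ (l * α / s) *
      volume.real (β⁻¹ • B) ^ (1 - l * α / s) := by
    have e1 := Real.one_le_rpow h1 ht.le
    have e2 := Real.one_le_rpow h2 (show 0 ≤ 1 - l * α / s by linarith)
    nlinarith
  have h6 := measureReal_mono (μ := volume) h4 (hA.comb hB).measure_lt_top.ne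
  rw [hscale _ _ hspos] at h6
  have h7 : 0 < s ^ n := by positivity
  nlinarith

end

/-! ### Measures satisfying a Brunn–Minkowski inequality -/

section

open Set Filter Topology

/-- The measure `μ` satisfies the Brunn–Minkowski inequality of dimension `n`. The inequality
`λ μ(A)^(1/n) + (1 - λ) μ(B)^(1/n) ≤ μ(λ A + (1 - λ) B)^(1/n)` for compact sets of positive
measure is stated through `n`-th powers. -/
def BM {E : Type*} [NormedAddCommGroup E] [NormedSpace ℝ E] [MeasurableSpace E]
    (n : ℕ) (μ : Measure E) : Prop :=
  ∀ A B : Set E, IsCompact A → IsCompact B → ∀ l α β : ℝ, 0 < l → l < 1 → 0 < α → 0 < β →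
    α ^ n ≤ μ.real A → β ^ n ≤ μ.real B → (l * α + (1 - l) * β) ^ n ≤ μ.real (comb l A B)

/-- Lebesgue measure on a convex body satisfies the Brunn–Minkowski inequality of its dimension. -/
theorem BM.volume_restrict {n : ℕ} {K : Set (Fin n → ℝ)} (hK : IsCompact K) (hKc : Convex ℝ K) :
    BM n (volume.restrict K) := by
  intro A B hA hB l α β hl hl1 hα hβ hαA hβB
  have hfin : volume K ≠ ⊤ := hK.measure_lt_top.ne
  rw [Measure.real, Measure.restrict_apply hA.measurableSet] at hαA
  rw [Measure.real, Measure.restrict_apply hB.measurableSet] at hβB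
  refine (brunn_minkowski_add (hA.inter hK) (hB.inter hK) hl hl1 hα hβ hαA hβB).trans ?_
  rw [Measure.real, Measure.real, Measure.restrict_apply (hA.comb hB).measurableSet]
  refine ENNReal.toReal_mono (measure_ne_top_of_subset inter_subset_right hfin) (measure_mono ?_)
  rintro _ ⟨⟨x, y⟩, ⟨hx, hy⟩, rfl⟩
  exact ⟨mem_comb hx.1 hy.1, hKc hx.2 hy.2 hl.le (by linarith) (by ring)⟩

variable {E : Type*} [NormedAddCommGroup E] [NormedSpace ℝ E] [FiniteDimensional ℝ E]
  [MeasurableSpace E] [BorelSpace E]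

/-- The Brunn–Minkowski inequality is inherited by the normalized restriction to a closed convex
set. -/
theorem BM.cond {n : ℕ} (hn : 0 < n) {μ : Measure E} [IsFiniteMeasure μ] (hμ : BM n μ) {H : Set E}
    (hH : IsClosed H) (hHc : Convex ℝ H) (hH0 : μ H ≠ 0) : BM n (ProbabilityTheory.cond μ H) := by
  intro A B hA hB l α β hl hl1 hα hβ hαA hβB
  have hl1' : 0 < 1 - l := by linarith
  have hc : 0 < μ.real H := ENNReal.toReal_pos hH0 (measure_ne_top _ _)
  set γ := μ.real H ^ ((n : ℝ)⁻¹) with hγ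
  have hγpos : 0 < γ := by positivity
  have hγn : γ ^ n = μ.real H := Real.rpow_inv_natCast_pow hc.le hn.ne'
  have hreal : ∀ S, (ProbabilityTheory.cond μ H).real S = (μ.real H)⁻¹ * μ.real (H ∩ S) := by
    intro S
    rw [Measure.real, ProbabilityTheory.cond_apply hH.measurableSet, ENNReal.toReal_mul,
      ENNReal.toReal_inv]
    rfl
  rw [hreal, ← div_eq_inv_mul, le_div_iff₀ hc, ← hγn, ← mul_pow] at hαA hβB ⊢
  have := hμ (H ∩ A) (H ∩ B) (hA.inter_left hH) (hB.inter_left hH) l _ _ hl hl1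
    (by positivity) (by positivity) hαA hβB
  rw [add_mul, mul_assoc, mul_assoc]
  refine this.trans (measureReal_mono ?_ (measure_ne_top _ _))
  rintro _ ⟨⟨x, y⟩, ⟨hx, hy⟩, rfl⟩
  exact ⟨hHc hx.1 hy.1 hl.le hl1'.le (by ring), mem_comb hx.2 hy.2⟩

theorem comb_cthickening_subset {A B : Set E} (hA : IsCompact A) (hB : IsCompact B) {l δ : ℝ}
    (hl : 0 < l) (hl1 : l < 1) (hδ : 0 ≤ δ) :
    comb l (Metric.cthickening δ A) (Metric.cthickening δ B) ⊆
      Metric.cthickening δ (comb l A B) := by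
  rintro _ ⟨⟨x, y⟩, ⟨hx, hy⟩, rfl⟩
  simp only [hA.cthickening_eq_biUnion_closedBall hδ, hB.cthickening_eq_biUnion_closedBall hδ,
    mem_iUnion, Metric.mem_closedBall, exists_prop] at hx hy
  obtain ⟨a, ha, hxa⟩ := hx
  obtain ⟨b, hb, hyb⟩ := hy
  refine Metric.mem_cthickening_of_dist_le _ _ _ _ (mem_comb ha hb) ?_
  rw [dist_eq_norm] at hxa hyb ⊢
  have : l • x + (1 - l) • y - (l • a + (1 - l) • b) = l • (x - a) + (1 - l) • (y - b) := by
    module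
  simp only [this]
  refine (norm_add_le _ _).trans ?_
  rw [norm_smul, norm_smul, Real.norm_of_nonneg hl.le, Real.norm_of_nonneg (by linarith)]
  nlinarith

/-- The Brunn–Minkowski inequality is stable under weak limits: apply it to closed thickenings of `A`
and `B`, use the portmanteau theorem with `α`, `β` lowered by a factor `s < 1`, and let the
thickness tend to `0` and `s` to `1`. -/
theorem isClosed_BM {n : ℕ} (hn : 0 < n) :
    IsClosed {μ : ProbabilityMeasure E | BM n (μ : Measure E)} := by
  refine isClosed_of_closure_subset fun ν hν => ?_
  set S := {μ : ProbabilityMeasure E | BM n (μ : Measure E)} with hS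
  have : (𝓝[S] ν).NeBot := mem_closure_iff_nhdsWithin_neBot.1 hν
  have htend : Tendsto (fun μ : ProbabilityMeasure E => μ) (𝓝[S] ν) (𝓝 ν) :=
    tendsto_id.mono_left nhdsWithin_le_nhds
  intro A B hA hB l α β hl hl1 hα hβ hαA hβB
  have hl1' : 0 < 1 - l := by linarith
  -- near `ν`, thickenings of `A` have at least almost the measure of `A`
  have hlow : ∀ (T : Set E) (a δ : ℝ), 0 < δ → 0 < a → a < (ν : Measure E).real T →
      ∀ᶠ μ : ProbabilityMeasure E in 𝓝[S] ν,
        a ≤ (μ : Measure E).real (Metric.cthickening δ T) := by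
    intro T a δ hδ ha haT
    have h1 := (ν : Measure E).mono (Metric.self_subset_thickening hδ T)
    have h2 : ENNReal.ofReal a < (ν : Measure E) (Metric.thickening δ T) := by
      refine lt_of_lt_of_le ?_ h1
      exact (ENNReal.ofReal_lt_iff_lt_toReal ha.le (measure_ne_top _ _)).2 haT
    have h3 := h2.trans_le (ProbabilityMeasure.le_liminf_measure_open_of_tendsto htend
      Metric.isOpen_thickening)
    filter_upwards [eventually_lt_of_lt_liminf h3] with μ hμ
    refine (ENNReal.ofReal_le_iff_le_toReal (measure_ne_top _ _)).1 (hμ.le.trans ?_)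
    exact measure_mono (Metric.thickening_subset_cthickening _ _)
  have hC : IsCompact (comb l A B) := hA.comb hB
  have hstep : ∀ s δ : ℝ, 0 < s → s < 1 → 0 < δ →
      ENNReal.ofReal ((l * (s * α) + (1 - l) * (s * β)) ^ n) ≤
        (ν : Measure E) (Metric.cthickening δ (comb l A B)) := by
    intro s δ hs hs1 hδ
    have hpow : ∀ x : ℝ, 0 < x → (s * x) ^ n < x ^ n := fun x hx =>
      pow_lt_pow_left₀ (by nlinarith) (by positivity) hn.ne'
    have eA := hlow A ((s * α) ^ n) δ hδ (by positivity) ((hpow α hα).trans_le hαA)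
    have eB := hlow B ((s * β) ^ n) δ hδ (by positivity) ((hpow β hβ).trans_le hβB)
    refine le_trans ?_ (ProbabilityMeasure.limsup_measure_closed_le_of_tendsto htend
      Metric.isClosed_cthickening)
    refine le_limsup_of_frequently_le' (Eventually.frequently ?_)
    filter_upwards [eA, eB, self_mem_nhdsWithin] with μ h1 h2 h3
    have h4 := h3 _ _ hA.cthickening hB.cthickening l _ _ hl hl1 (mul_pos hs hα) (mul_pos hs hβ)
      h1 h2
    refine (ENNReal.ofReal_le_ofReal h4).trans ?_
    rw [Measure.real, ENNReal.ofReal_toReal (measure_ne_top _ _)]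
    exact measure_mono (comb_cthickening_subset hA hB hl hl1 hδ.le)
  have hstep2 : ∀ s : ℝ, 0 < s → s < 1 →
      (l * (s * α) + (1 - l) * (s * β)) ^ n ≤ (ν : Measure E).real (comb l A B) := by
    intro s hs hs1
    refine (ENNReal.ofReal_le_iff_le_toReal (measure_ne_top _ _)).1 ?_
    refine ge_of_tendsto ((tendsto_measure_cthickening_of_isCompact hC).mono_left
      (nhdsWithin_le_nhds (s := Ioi 0))) ?_
    filter_upwards [self_mem_nhdsWithin] with δ hδ
    exact hstep s δ hs hs1 hδ
  have hlim : Tendsto (fun s : ℝ => (l * (s * α) + (1 - l) * (s * β)) ^ n) (𝓝[<] 1)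
      (𝓝 ((l * (1 * α) + (1 - l) * (1 * β)) ^ n)) :=
    (Continuous.tendsto (by fun_prop) 1).mono_left nhdsWithin_le_nhds
  rw [one_mul, one_mul] at hlim
  refine le_of_tendsto hlim ?_
  filter_upwards [Ioo_mem_nhdsLT (show (0 : ℝ) < 1 by norm_num)] with s hs
  exact hstep2 s hs.1 hs.2

/-- A hyperplane missing a point of the support carries no mass: otherwise the interpolations
of a subset of the hyperplane with a ball off it would have mass bounded below while
accumulating on, and avoiding, the hyperplane. -/
theorem BM.hyperplane_null {n : ℕ} (hn : 0 < n) {μ : Measure E} [IsProbabilityMeasure μ]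
    (hμ : BM n μ) {ℓ : E → ℝ} (hℓ : Continuous ℓ)
    (haff : ∀ (l : ℝ) (x y : E), ℓ (l • x + (1 - l) • y) = l * ℓ x + (1 - l) * ℓ y)
    {y : E} (hy : y ∈ μ.support) (hy0 : ℓ y ≠ 0) : μ {x | ℓ x = 0} = 0 := by
  by_contra hcon
  have hHm : MeasurableSet {x | ℓ x = 0} := (isClosed_eq hℓ continuous_const).measurableSet
  obtain ⟨A, hAH, hA, hA0⟩ := hHm.exists_lt_isCompact (pos_iff_ne_zero.2 hcon)
  obtain ⟨r, hr, hball⟩ : ∃ r > 0, Metric.closedBall y r ⊆ {x | ℓ x ≠ 0} :=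
    Metric.nhds_basis_closedBall.mem_iff.1 ((isOpen_ne_fun hℓ continuous_const).mem_nhds hy0)
  set B := Metric.closedBall y r with hB
  have hBc : IsCompact B := isCompact_closedBall y r
  have hB0 : 0 < μ B :=
    (Measure.mem_support_iff_forall y).1 hy _ (Metric.closedBall_mem_nhds y hr)
  set c := min (μ.real A) (μ.real B) with hc
  have hcpos : 0 < c := lt_min (ENNReal.toReal_pos hA0.ne' (measure_ne_top _ _))
    (ENNReal.toReal_pos hB0.ne' (measure_ne_top _ _))
  have hc1 : c ≤ 1 := (min_le_left _ _).trans measureReal_le_one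
  obtain ⟨M, hM⟩ := hBc.exists_bound_of_continuousOn hℓ.continuousOn
  have hM0 : 0 ≤ M := (norm_nonneg _).trans (hM y (Metric.mem_closedBall_self hr.le))
  have hcn : c ^ n ≤ c := pow_le_of_le_one hcpos.le hc1 hn.ne'
  set T : ℕ → Set E := fun k => {x | ℓ x ≠ 0 ∧ |ℓ x| ≤ M / (k + 2)} with hT
  have hTm : ∀ k, MeasurableSet (T k) := fun k =>
    ((isOpen_ne_fun hℓ continuous_const).measurableSet).inter
      ((isClosed_le hℓ.abs continuous_const).measurableSet)
  have hanti : Antitone T := by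
    intro i j hij x hx
    refine ⟨hx.1, hx.2.trans ?_⟩
    have : (i : ℝ) ≤ j := by exact_mod_cast hij
    gcongr
  have hinter : ⋂ k, T k = ∅ := by
    rw [eq_empty_iff_forall_notMem]
    intro x hx
    rw [mem_iInter] at hx
    have hlim : Tendsto (fun k : ℕ => M / ((k : ℝ) + 2)) atTop (𝓝 0) :=
      tendsto_const_nhds.div_atTop
        (tendsto_atTop_add_const_right _ _ tendsto_natCast_atTop_atTop)
    have := ge_of_tendsto' hlim fun k => (hx k).2
    exact (hx 0).1 (abs_nonpos_iff.1 this)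
  have hlim := tendsto_measure_iInter_atTop (μ := μ) (fun k => (hTm k).nullMeasurableSet) hanti
    ⟨0, measure_ne_top _ _⟩
  rw [hinter, measure_empty] at hlim
  have hlow : ∀ k, ENNReal.ofReal (c ^ n) ≤ μ (T k) := by
    intro k
    have hk : (0 : ℝ) < (k : ℝ) + 2 := by positivity
    have ht1 : 1 / ((k : ℝ) + 2) < 1 := by
      rw [div_lt_one hk]; linarith [(k.cast_nonneg : (0 : ℝ) ≤ k)]
    have ht0 : 0 < 1 / ((k : ℝ) + 2) := by positivity
    set t := 1 / ((k : ℝ) + 2) with ht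
    have h1 := hμ A B hA hBc (1 - t) c c (by linarith) (by linarith) hcpos hcpos
      (hcn.trans (min_le_left _ _)) (hcn.trans (min_le_right _ _))
    rw [show (1 - t) * c + (1 - (1 - t)) * c = c by ring] at h1
    refine (ENNReal.ofReal_le_iff_le_toReal (measure_ne_top _ _)).2 (h1.trans ?_)
    refine measureReal_mono ?_ (measure_ne_top _ _)
    rintro _ ⟨⟨a, b⟩, ⟨ha, hb⟩, rfl⟩
    have e : ℓ ((1 - t) • a + (1 - (1 - t)) • b) = t * ℓ b := by
      rw [haff, show ℓ a = 0 from hAH ha]; ring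
    refine ⟨?_, ?_⟩
    · simp only [e]
      exact mul_ne_zero ht0.ne' (hball hb)
    · simp only [e]
      rw [abs_mul, abs_of_pos ht0, ht, one_div_mul_eq_div]
      gcongr
      exact hM b hb
  have := ge_of_tendsto' hlim hlow
  have h0 : 0 < ENNReal.ofReal (c ^ n) := ENNReal.ofReal_pos.2 (by positivity)
  exact absurd this (not_le.2 h0)

end

/-! ### Localization -/

section

open Set Filter Topology

variable {E : Type*} [NormedAddCommGroup E] [NormedSpace ℝ E] [FiniteDimensional ℝ E]
  [MeasurableSpace E] [BorelSpace E]

theorem restrict_eq_self_of_compl_null {K : Set E} {μ : Measure E} (h : μ Kᶜ = 0) :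
    μ.restrict K = μ :=
  Measure.restrict_eq_self_of_ae_mem (by rwa [ae_iff])

theorem integrable_of_compl_null {K : Set E} (hK : IsCompact K) {μ : Measure E}
    [IsFiniteMeasure μ] (h : μ Kᶜ = 0) {g : E → ℝ} (hg : Continuous g) : Integrable g μ := by
  have := hg.continuousOn.integrableOn_compact (μ := μ) hK
  rwa [IntegrableOn, restrict_eq_self_of_compl_null h] at this

/-- The probability measures carried by a compact set form a weakly compact set. -/
theorem isCompact_carried {K : Set E} (hK : IsCompact K) :
    IsCompact {μ : ProbabilityMeasure E | (μ : Measure E) Kᶜ = 0} := by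
  have : CompactSpace K := isCompact_iff_compactSpace.1 hK
  have hc := isCompact_range (ProbabilityMeasure.continuous_map
    (continuous_subtype_val : Continuous (Subtype.val : K → E)))
  convert hc using 1
  ext μ
  simp only [mem_ofPred_eq, mem_range]
  constructor
  · intro h
    have h1 : (Measure.comap Subtype.val (μ : Measure E) : Measure K).map Subtype.val = μ := by
      rw [map_comap_subtype_coe hK.measurableSet, restrict_eq_self_of_compl_null h]
    have h2 : IsProbabilityMeasure (Measure.comap Subtype.val (μ : Measure E) : Measure K) := by
      constructor
      have := congrArg (fun m => m univ) h1
      simpa [Measure.map_apply measurable_subtype_coe MeasurableSet.univ] using this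
    exact ⟨⟨_, h2⟩, Subtype.ext h1⟩
  · rintro ⟨ν, rfl⟩
    rw [ProbabilityMeasure.toMeasure_map, Measure.map_apply measurable_subtype_coe
      hK.measurableSet.compl]
    simp

/-- On measures carried by a compact set, the integral of an arbitrary continuous function is weakly
continuous: off the set the function may be truncated to a bounded one. -/
theorem continuousOn_integral {K : Set E} (hK : IsCompact K) {g : E → ℝ} (hg : Continuous g) :
    ContinuousOn (fun μ : ProbabilityMeasure E => ∫ x, g x ∂(μ : Measure E))
      {μ : ProbabilityMeasure E | (μ : Measure E) Kᶜ = 0} := by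
  obtain ⟨C, hC⟩ := hK.exists_bound_of_continuousOn hg.continuousOn
  set g' : BoundedContinuousFunction E ℝ := BoundedContinuousFunction.ofNormedAddCommGroup
    (fun x => max (-|C|) (min (g x) |C|)) (by fun_prop) |C| (fun x => by
      rw [Real.norm_eq_abs, abs_le]
      refine ⟨le_max_left _ _, max_le (by linarith [abs_nonneg C]) (min_le_right _ _)⟩) with hg'
  refine (ProbabilityMeasure.continuous_integral_boundedContinuousFunction g').continuousOn.congr ?_
  intro μ hμ
  refine integral_congr_ae ?_
  have : ∀ᵐ x ∂(μ : Measure E), x ∈ K := by rwa [ae_iff]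
  filter_upwards [this] with x hx
  have h1 := hC x hx
  rw [Real.norm_eq_abs] at h1
  have h2 := abs_le.1 (h1.trans (le_abs_self C))
  simp only [hg', BoundedContinuousFunction.coe_ofNormedAddCommGroup]
  rw [min_eq_left h2.2, max_eq_right h2.1]

/-- Bisection: a measure whose support contains a triangle is cut by a plane through the
centroid of that triangle into two parts of positive mass on each of which `g` has integral zero.
The plane is found by rotating it through a half turn and applying the intermediate value
theorem. -/
theorem exists_bisection {n : ℕ} (hn : 0 < n) {μ : Measure E} [IsProbabilityMeasure μ]
    (hμ : BM n μ) {g : E → ℝ} (hg : Integrable g μ) (hg0 : ∫ x, g x ∂μ = 0)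
    {L₁ L₂ : E →L[ℝ] ℝ} {x₀ x₁ x₂ : E} (h₀ : x₀ ∈ μ.support) (h₁ : x₁ ∈ μ.support)
    (h₂ : x₂ ∈ μ.support) (h11 : L₁ (x₁ - x₀) = 1) (h12 : L₁ (x₂ - x₀) = 0)
    (h21 : L₂ (x₁ - x₀) = 0) (h22 : L₂ (x₂ - x₀) = 1) :
    ∃ (L : E →L[ℝ] ℝ) (c : ℝ), 0 < μ {x | c < L x} ∧ 0 < μ {x | L x < c} ∧
      μ {x | L x = c} = 0 ∧ ∫ x in {x | c ≤ L x}, g x ∂μ = 0 ∧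
      ∫ x in {x | L x ≤ c}, g x ∂μ = 0 := by
  -- `M θ x = C θ` are the planes through the centroid of the triangle that contain the common
  -- kernel of `L₁` and `L₂`; the factor `3` clears the denominator of the centroid
  set M : ℝ → E →L[ℝ] ℝ := fun θ => Real.cos θ • (3 • L₁) + Real.sin θ • (3 • L₂) with hM
  set C : ℝ → ℝ := fun θ => Real.cos θ * (3 * L₁ x₀ + 1) + Real.sin θ * (3 * L₂ x₀ + 1) with hC
  have hMC : ∀ x, Continuous fun θ => M θ x - C θ := by
    intro x
    simp only [hM, hC, add_apply, smul_apply]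
    fun_prop
  rw [map_sub] at h11 h12 h21 h22
  have v₀ : ∀ θ, M θ x₀ - C θ = - (Real.cos θ + Real.sin θ) := fun θ => by
    simp only [hM, hC, add_apply, smul_apply, smul_eq_mul,
      nsmul_eq_mul]
    push_cast
    ring
  have v₁ : ∀ θ, M θ x₁ - C θ = 2 * Real.cos θ - Real.sin θ := fun θ => by
    simp only [hM, hC, add_apply, smul_apply, smul_eq_mul,
      nsmul_eq_mul, show L₁ x₁ = 1 + L₁ x₀ by linarith, show L₂ x₁ = L₂ x₀ by linarith]
    push_cast
    ring
  have v₂ : ∀ θ, M θ x₂ - C θ = 2 * Real.sin θ - Real.cos θ := fun θ => by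
    simp only [hM, hC, add_apply, smul_apply, smul_eq_mul,
      nsmul_eq_mul, show L₁ x₂ = L₁ x₀ by linarith, show L₂ x₂ = 1 + L₂ x₀ by linarith]
    push_cast
    ring
  have hopen : ∀ θ y, y ∈ μ.support → 0 < M θ y - C θ → 0 < μ {x | C θ < M θ x} := by
    intro θ y hy h
    refine (Measure.mem_support_iff_forall y).1 hy _ ?_
    exact (isOpen_lt continuous_const (M θ).continuous).mem_nhds (by simpa using h)
  have hopen' : ∀ θ y, y ∈ μ.support → M θ y - C θ < 0 → 0 < μ {x | M θ x < C θ} := by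
    intro θ y hy h
    refine (Measure.mem_support_iff_forall y).1 hy _ ?_
    exact (isOpen_lt (M θ).continuous continuous_const).mem_nhds (by simpa using h)
  have hcs : ∀ θ, Real.cos θ ≠ 0 ∨ Real.sin θ ≠ 0 := by
    intro θ
    by_contra! h
    have := Real.sin_sq_add_cos_sq θ
    rw [h.1, h.2] at this
    norm_num at this
  have hpos : ∀ θ, 0 < μ {x | C θ < M θ x} := by
    intro θ
    by_contra hcon
    have i0 := mt (hopen θ x₀ h₀) hcon
    have i1 := mt (hopen θ x₁ h₁) hcon
    have i2 := mt (hopen θ x₂ h₂) hcon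
    rw [v₀, not_lt] at i0
    rw [v₁, not_lt] at i1
    rw [v₂, not_lt] at i2
    rcases hcs θ with h | h <;> exact h (by linarith)
  have hneg : ∀ θ, 0 < μ {x | M θ x < C θ} := by
    intro θ
    by_contra hcon
    have i0 := mt (hopen' θ x₀ h₀) hcon
    have i1 := mt (hopen' θ x₁ h₁) hcon
    have i2 := mt (hopen' θ x₂ h₂) hcon
    rw [v₀, not_lt] at i0
    rw [v₁, not_lt] at i1
    rw [v₂, not_lt] at i2
    rcases hcs θ with h | h <;> exact h (by linarith)
  have hnull : ∀ θ, μ {x | M θ x - C θ = 0} = 0 := by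
    intro θ
    obtain ⟨y, hy, hy0⟩ : ∃ y ∈ μ.support, M θ y - C θ ≠ 0 := by
      by_contra! hcon
      have i0 := hcon x₀ h₀
      have i1 := hcon x₁ h₁
      rw [v₀] at i0
      rw [v₁] at i1
      rcases hcs θ with h | h <;> exact h (by linarith)
    refine hμ.hyperplane_null hn (ℓ := fun x => M θ x - C θ) (by fun_prop) (fun l x y => ?_) hy hy0
    rw [map_add, map_smul, map_smul, smul_eq_mul, smul_eq_mul]
    ring
  set J : ℝ → ℝ := fun θ => ∫ x, (if 0 ≤ M θ x - C θ then g x else 0) ∂μ with hJ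
  have hmeas : ∀ θ, MeasurableSet {x | 0 ≤ M θ x - C θ} := fun θ =>
    (isClosed_le continuous_const (by fun_prop)).measurableSet
  have hif : ∀ θ, (fun x => if 0 ≤ M θ x - C θ then g x else 0) =
      indicator {x | 0 ≤ M θ x - C θ} g := fun θ => by ext x; simp [indicator]
  have hJcont : Continuous J := by
    refine continuous_iff_continuousAt.2 fun θ => ?_
    refine continuousAt_of_dominated (bound := fun x => ‖g x‖) ?_ ?_ hg.norm ?_
    · refine Eventually.of_forall fun θ => ?_
      rw [hif]
      exact hg.1.indicator (hmeas θ)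
    · refine Eventually.of_forall fun θ => ae_of_all _ fun x => ?_
      split_ifs <;> simp
    · have : ∀ᵐ x ∂μ, M θ x - C θ ≠ 0 := by rw [ae_iff]; simpa using hnull θ
      filter_upwards [this] with x hx
      rcases lt_or_gt_of_ne hx with h | h
      · have hev := (hMC x).continuousAt.eventually_lt (continuousAt_const (x := θ) (y := (0 : ℝ))) h
        refine (continuousAt_const (y := (0 : ℝ))).congr ?_
        filter_upwards [hev] with t ht
        rw [if_neg (not_le.2 ht)]
      · have hev := (continuousAt_const (x := θ) (y := (0 : ℝ))).eventually_lt (hMC x).continuousAt h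
        refine (continuousAt_const (y := g x)).congr ?_
        filter_upwards [hev] with t ht
        rw [if_pos ht.le]
  have hJset : ∀ θ, J θ = ∫ x in {x | C θ ≤ M θ x}, g x ∂μ := by
    intro θ
    simp only [hJ]
    rw [hif, integral_indicator (hmeas θ)]
    simp only [sub_nonneg]
  have hcompl : ∀ θ, ∫ x in {x | M θ x ≤ C θ}, g x ∂μ = - J θ := by
    intro θ
    have e : ({x | M θ x ≤ C θ} : Set E) =ᵐ[μ] ({x | C θ ≤ M θ x}ᶜ : Set E) := by
      have : ∀ᵐ x ∂μ, M θ x - C θ ≠ 0 := by rw [ae_iff]; simpa using hnull θ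
      filter_upwards [this] with x hx
      refine propext ⟨fun h h' => hx (by linarith [show M θ x ≤ C θ from h, show C θ ≤ M θ x from h']),
        fun h => le_of_lt (not_le.1 h)⟩
    rw [setIntegral_congr_set e, hJset]
    have := integral_add_compl (μ := μ) (isClosed_le continuous_const (M θ).continuous :
      IsClosed {x | C θ ≤ M θ x}).measurableSet hg
    linarith
  have hJpi : J Real.pi = - J 0 := by
    rw [← hcompl 0, hJset]
    congr 2
    ext x
    simp [hM, hC]
  obtain ⟨θ, -, hθ⟩ : (0 : ℝ) ∈ J '' uIcc 0 Real.pi := by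
    refine intermediate_value_uIcc hJcont.continuousOn ?_
    rw [hJpi, mem_uIcc]
    rcases le_total 0 (J 0) with h | h
    · exact Or.inr ⟨by linarith, h⟩
    · exact Or.inl ⟨h, by linarith⟩
  refine ⟨M θ, C θ, hpos θ, hneg θ, ?_, ?_, ?_⟩
  · simpa [sub_eq_zero] using hnull θ
  · rw [← hJset, hθ]
  · rw [hcompl, hθ, neg_zero]

/-- Localization: among all measures with the Brunn–Minkowski property that are carried by `K`
and satisfy `∫ g = 0`, the integral of `h` does not decrease on passing to a suitable measure
carried by a line. Take a maximizer of `∫ h`, and among the maximizers one whose barycenter is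
longest; a bisection would write it as a proper mixture of two other maximizers with different
barycenters. -/
theorem localization {m n : ℕ} (hn : 0 < n) {K : Set (Fin m → ℝ)} (hK : IsCompact K)
    {g h : (Fin m → ℝ) → ℝ} (hg : Continuous g) (hh : Continuous h)
    (μ₀ : Measure (Fin m → ℝ)) [IsProbabilityMeasure μ₀] (hμ₀ : BM n μ₀) (hμ₀K : μ₀ Kᶜ = 0)
    (h0 : ∫ x, g x ∂μ₀ = 0) :
    ∃ μ : Measure (Fin m → ℝ), IsProbabilityMeasure μ ∧ BM n μ ∧ μ Kᶜ = 0 ∧ ∫ x, g x ∂μ = 0 ∧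
      ∫ x, h x ∂μ₀ ≤ ∫ x, h x ∂μ ∧
      ∃ x₀ v : Fin m → ℝ, ∀ᵐ x ∂μ, ∃ t : ℝ, x = t • v + x₀ := by
  set Q : Set (ProbabilityMeasure (Fin m → ℝ)) := {μ | (μ : Measure (Fin m → ℝ)) Kᶜ = 0} with hQ
  have hQc : IsCompact Q := isCompact_carried hK
  set P : Set (ProbabilityMeasure (Fin m → ℝ)) :=
    (Q ∩ (fun μ => ∫ x, g x ∂(μ : Measure (Fin m → ℝ))) ⁻¹' {0}) ∩
      {μ | BM n (μ : Measure (Fin m → ℝ))} with hP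
  have hPQ : P ⊆ Q := fun μ hμ => hμ.1.1
  have hPc : IsCompact P := hQc.of_isClosed_subset
    (((continuousOn_integral hK hg).preimage_isClosed_of_isClosed hQc.isClosed
      isClosed_singleton).inter (isClosed_BM hn)) hPQ
  have hP0 : (⟨μ₀, inferInstance⟩ : ProbabilityMeasure (Fin m → ℝ)) ∈ P := ⟨⟨hμ₀K, h0⟩, hμ₀⟩
  obtain ⟨μ₁, hμ₁P, hμ₁⟩ := hPc.exists_isMaxOn ⟨_, hP0⟩ ((continuousOn_integral hK hh).mono hPQ)
  set R : Set (ProbabilityMeasure (Fin m → ℝ)) :=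
    P ∩ (fun μ => ∫ x, h x ∂(μ : Measure (Fin m → ℝ))) ⁻¹'
      {∫ x, h x ∂(μ₁ : Measure (Fin m → ℝ))} with hR
  have hRP : R ⊆ P := inter_subset_left
  have hRc : IsCompact R := hPc.of_isClosed_subset
    (((continuousOn_integral hK hh).mono hPQ).preimage_isClosed_of_isClosed hPc.isClosed
      isClosed_singleton) hRP
  have hΨ : ContinuousOn (fun μ : ProbabilityMeasure (Fin m → ℝ) =>
      ∑ i, (∫ x, x i ∂(μ : Measure (Fin m → ℝ))) ^ 2) R :=
    continuousOn_finset_sum _ fun i _ =>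
      (((continuousOn_integral hK (continuous_apply i)).mono (hRP.trans hPQ)).pow 2)
  obtain ⟨μ, hμR, hμmax⟩ := hRc.exists_isMaxOn ⟨μ₁, hμ₁P, rfl⟩ hΨ
  obtain ⟨⟨⟨hμK, hμg⟩, hμBM⟩, hμh⟩ := hμR
  simp only [mem_preimage, mem_singleton_iff] at hμg hμh
  refine ⟨μ, inferInstance, hμBM, hμK, hμg, ?_, ?_⟩
  · rw [hμh]; exact hμ₁ hP0
  by_contra hline
  set ν : Measure (Fin m → ℝ) := (μ : Measure (Fin m → ℝ)) with hν
  have hline' : ∀ x₀ v : Fin m → ℝ, ∃ x ∈ ν.support, ∀ t : ℝ, x ≠ t • v + x₀ := by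
    intro x₀ v
    by_contra! hcon
    refine hline ⟨x₀, v, ?_⟩
    filter_upwards [Measure.support_mem_ae (μ := ν)] with x hx
    exact hcon x hx
  have hprobne : ν ≠ 0 := IsProbabilityMeasure.ne_zero ν
  obtain ⟨x₀, hx₀⟩ := Measure.nonempty_support hprobne
  obtain ⟨x₁, hx₁, hx₁'⟩ := hline' x₀ 0
  obtain ⟨x₂, hx₂, hx₂'⟩ := hline' x₀ (x₁ - x₀)
  have hne1 : x₁ - x₀ ≠ 0 := fun hz => hx₁' 0 (by rw [zero_smul, zero_add]; exact sub_eq_zero.1 hz)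
  have hn2 : x₂ - x₀ ∉ Submodule.span ℝ {x₁ - x₀} := by
    rw [Submodule.mem_span_singleton]
    rintro ⟨t, ht⟩
    exact hx₂' t (by rw [ht]; abel)
  have hn1 : x₁ - x₀ ∉ Submodule.span ℝ {x₂ - x₀} := by
    rw [Submodule.mem_span_singleton]
    rintro ⟨t, ht⟩
    have ht0 : t ≠ 0 := by rintro rfl; rw [zero_smul] at ht; exact hne1 ht.symm
    refine hn2 (Submodule.mem_span_singleton.2 ⟨t⁻¹, ?_⟩)
    rw [← ht, smul_smul, inv_mul_cancel₀ ht0, one_smul]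
  have dual : ∀ u w : Fin m → ℝ, u ∉ Submodule.span ℝ {w} →
      ∃ L : (Fin m → ℝ) →L[ℝ] ℝ, L u = 1 ∧ L w = 0 := by
    intro u w huw
    obtain ⟨f, hf, hker⟩ := Submodule.exists_le_ker_of_notMem huw
    have hw : f w = 0 := hker (Submodule.mem_span_singleton_self w)
    refine ⟨(f u)⁻¹ • LinearMap.toContinuousLinearMap f, ?_, ?_⟩
    · simp [hf]
    · simp [hw]
  obtain ⟨L₁, h11, h12⟩ := dual _ _ hn1
  obtain ⟨L₂, h22, h21⟩ := dual _ _ hn2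
  have hint : ∀ u : (Fin m → ℝ) → ℝ, Continuous u → Integrable u ν :=
    fun u hu => integrable_of_compl_null hK hμK hu
  obtain ⟨L, c, hpos, hneg, hnull, hgp, hgn⟩ := exists_bisection hn hμBM (hint g hg) hμg
    hx₀ hx₁ hx₂ h11 h12 h21 h22
  -- the two halves and their normalizations
  set H : Set (Fin m → ℝ) := {x | c ≤ L x} with hH
  set H' : Set (Fin m → ℝ) := {x | L x ≤ c} with hH'
  have hHcl : IsClosed H := isClosed_le continuous_const L.continuous
  have hHcl' : IsClosed H' := isClosed_le L.continuous continuous_const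
  have hHconv : Convex ℝ H := convex_halfSpace_ge L.toLinearMap.isLinear c
  have hHconv' : Convex ℝ H' := convex_halfSpace_le L.toLinearMap.isLinear c
  have hHpos : 0 < ν H := hpos.trans_le (measure_mono fun x (hx : c < L x) => hx.le)
  have hHpos' : 0 < ν H' := hneg.trans_le (measure_mono fun x (hx : L x < c) => hx.le)
  have hcondint : ∀ (S : Set (Fin m → ℝ)) (u : (Fin m → ℝ) → ℝ),
      ∫ x, u x ∂(ProbabilityTheory.cond ν S) = (ν.real S)⁻¹ * ∫ x in S, u x ∂ν := by
    intro S u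
    rw [ProbabilityTheory.cond, integral_smul_measure, ENNReal.toReal_inv]
    rfl
  have hmem : ∀ S : Set (Fin m → ℝ), IsClosed S → Convex ℝ S → 0 < ν S →
      ∫ x in S, g x ∂ν = 0 → ∃ κ ∈ P, (κ : Measure (Fin m → ℝ)) = ProbabilityTheory.cond ν S := by
    intro S hS hSc hS0 hSg
    have : IsProbabilityMeasure (ProbabilityTheory.cond ν S) :=
      ProbabilityTheory.cond_isProbabilityMeasure hS0.ne'
    refine ⟨⟨ProbabilityTheory.cond ν S, this⟩, ⟨⟨?_, ?_⟩, ?_⟩, rfl⟩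
    · exact ProbabilityTheory.cond_absolutelyContinuous hμK
    · show ∫ x, g x ∂(ProbabilityTheory.cond ν S) = 0
      rw [hcondint, hSg, mul_zero]
    · exact hμBM.cond hn hS hSc hS0.ne'
  obtain ⟨κ, hκP, hκ⟩ := hmem H hHcl hHconv hHpos hgp
  obtain ⟨κ', hκP', hκ'⟩ := hmem H' hHcl' hHconv' hHpos' hgn
  set a := ν.real H with ha
  set a' := ν.real H' with ha'
  have hapos : 0 < a := ENNReal.toReal_pos hHpos.ne' (measure_ne_top _ _)
  have hapos' : 0 < a' := ENNReal.toReal_pos hHpos'.ne' (measure_ne_top _ _)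
  have hae : (H' : Set (Fin m → ℝ)) =ᵐ[ν] (Hᶜ : Set (Fin m → ℝ)) := by
    have : ∀ᵐ x ∂ν, L x ≠ c := by rw [ae_iff]; simpa using hnull
    filter_upwards [this] with x hx
    exact propext ⟨fun h h' => hx (le_antisymm h h'), fun h => le_of_lt (not_le.1 h)⟩
  have hsplit : ∀ u : (Fin m → ℝ) → ℝ, Continuous u →
      ∫ x, u x ∂ν = a * ∫ x, u x ∂(κ : Measure (Fin m → ℝ)) +
        a' * ∫ x, u x ∂(κ' : Measure (Fin m → ℝ)) := by
    intro u hu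
    rw [hκ, hκ', hcondint, hcondint, mul_inv_cancel_left₀ hapos.ne', mul_inv_cancel_left₀ hapos'.ne',
      setIntegral_congr_set hae, integral_add_compl hHcl.measurableSet (hint u hu)]
  have haa : a + a' = 1 := by
    have := hsplit (fun _ => 1) continuous_const
    simpa using this.symm
  -- both halves maximize the integral of `h`
  have hκh := hμ₁ hκP
  have hκh' := hμ₁ hκP'
  simp only [mem_ofPred_eq] at hκh hκh'
  have hsh := hsplit h hh
  rw [hμh] at hsh
  have aux : ∀ s s' y z z' : ℝ, 0 < s → 0 < s' → s + s' = 1 → z ≤ y → z' ≤ y →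
      y = s * z + s' * z' → y ≤ z := by
    intro s s' y z z' hs hs' hss hz hz' hy
    by_contra! hlt
    have t1 := mul_lt_mul_of_pos_left hlt hs
    have t2 := mul_le_mul_of_nonneg_left hz' hs'.le
    have t3 : s * y + s' * y = y := by rw [← add_mul, hss, one_mul]
    linarith
  have hκR : κ ∈ R := ⟨hκP, le_antisymm hκh
    (aux a a' _ _ _ hapos hapos' haa hκh hκh' hsh)⟩
  have hκR' : κ' ∈ R := ⟨hκP', le_antisymm hκh'
    (aux a' a _ _ _ hapos' hapos ((add_comm _ _).trans haa) hκh' hκh (hsh.trans (add_comm _ _)))⟩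
  -- hence their barycenters agree
  have hΨ1 := hμmax hκR
  have hΨ2 := hμmax hκR'
  simp only [mem_ofPred_eq] at hΨ1 hΨ2
  set b : Fin m → ℝ := fun i => ∫ x, x i ∂(κ : Measure (Fin m → ℝ)) with hb
  set b' : Fin m → ℝ := fun i => ∫ x, x i ∂(κ' : Measure (Fin m → ℝ)) with hb'
  have hbary : ∀ i, ∫ x, x i ∂ν = a * b i + a' * b' i := fun i => hsplit _ (continuous_apply i)
  have hsum : ∑ i, (b i - b' i) ^ 2 ≤ 0 := by
    have e : a * a' * ∑ i, (b i - b' i) ^ 2 = a * ∑ i, b i ^ 2 + a' * ∑ i, b' i ^ 2 -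
        ∑ i, (a * b i + a' * b' i) ^ 2 := by
      rw [Finset.mul_sum, Finset.mul_sum, Finset.mul_sum, ← Finset.sum_add_distrib,
        ← Finset.sum_sub_distrib]
      refine Finset.sum_congr rfl fun i _ => ?_
      rw [show a' = 1 - a by linarith]
      ring
    have e2 : ∑ i, (∫ x, x i ∂ν) ^ 2 = ∑ i, (a * b i + a' * b' i) ^ 2 :=
      Finset.sum_congr rfl fun i _ => by rw [hbary]
    rw [e2] at hΨ1 hΨ2
    have e3 : a * a' * ∑ i, (b i - b' i) ^ 2 ≤ 0 := by
      rw [e]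
      have t1 := mul_le_mul_of_nonneg_left hΨ1 hapos.le
      have t2 := mul_le_mul_of_nonneg_left hΨ2 hapos'.le
      have t3 : a * ∑ i, (a * b i + a' * b' i) ^ 2 + a' * ∑ i, (a * b i + a' * b' i) ^ 2 =
        ∑ i, (a * b i + a' * b' i) ^ 2 := by rw [← add_mul, haa, one_mul]
      linarith
    by_contra! hcon
    have := mul_pos (mul_pos hapos hapos') hcon
    linarith
  have hbb : ∀ i, b i = b' i := by
    intro i
    have h1 : (b i - b' i) ^ 2 ≤ 0 :=
      (Finset.single_le_sum (f := fun i => (b i - b' i) ^ 2) (fun j _ => sq_nonneg _)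
        (Finset.mem_univ i)).trans hsum
    have := pow_eq_zero_iff (two_ne_zero) |>.1 (le_antisymm h1 (sq_nonneg _))
    linarith
  have hLint : ∀ κ : ProbabilityMeasure (Fin m → ℝ), κ ∈ P →
      ∫ x, L x ∂(κ : Measure (Fin m → ℝ)) =
        ∑ i, L (Pi.single i 1) * ∫ x, x i ∂(κ : Measure (Fin m → ℝ)) := by
    intro κ hκ
    have e : ∀ x : Fin m → ℝ, L x = ∑ i, L (Pi.single i 1) * x i := by
      intro x
      conv_lhs => rw [← Finset.univ_sum_single x, map_sum]
      refine Finset.sum_congr rfl fun i _ => ?_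
      rw [show (Pi.single i (x i) : Fin m → ℝ) = x i • Pi.single i (1 : ℝ) by
        rw [← Pi.single_smul]; simp, map_smul, smul_eq_mul, mul_comm]
    rw [integral_congr_ae (ae_of_all _ e), integral_finset_sum]
    · exact Finset.sum_congr rfl fun i _ => integral_const_mul _ _
    · exact fun i _ => integrable_of_compl_null hK (hPQ hκ) (by fun_prop)
  have hLeq : ∫ x, L x ∂(κ : Measure (Fin m → ℝ)) = ∫ x, L x ∂(κ' : Measure (Fin m → ℝ)) := by
    rw [hLint κ hκP, hLint κ' hκP']
    exact Finset.sum_congr rfl fun i _ => by rw [show ∫ x, x i ∂(κ : Measure (Fin m → ℝ)) = _ from hbb i]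
  -- but they lie strictly on different sides of the cut
  have hLc : Continuous fun x => L x - c := by fun_prop
  have s1 : 0 < ∫ x in H, (L x - c) ∂ν := by
    rw [setIntegral_pos_iff_support_of_nonneg_ae]
    · refine hpos.trans_le (measure_mono fun x (hx : c < L x) => ⟨?_, hx.le⟩)
      exact (sub_pos.2 hx).ne'
    · refine (ae_restrict_iff' hHcl.measurableSet).2 (ae_of_all _ fun x (hx : c ≤ L x) => ?_)
      exact sub_nonneg.2 hx
    · exact (hint _ hLc).integrableOn
  have s2 : 0 < ∫ x in H', (c - L x) ∂ν := by
    rw [setIntegral_pos_iff_support_of_nonneg_ae]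
    · refine hneg.trans_le (measure_mono fun x (hx : L x < c) => ⟨?_, hx.le⟩)
      exact (sub_pos.2 hx).ne'
    · refine (ae_restrict_iff' hHcl'.measurableSet).2 (ae_of_all _ fun x (hx : L x ≤ c) => ?_)
      exact sub_nonneg.2 hx
    · exact (hint _ (by fun_prop)).integrableOn
  have t1 : 0 < ∫ x, (L x - c) ∂(κ : Measure (Fin m → ℝ)) := by
    rw [hκ, hcondint]; positivity
  have t2 : 0 < ∫ x, (c - L x) ∂(κ' : Measure (Fin m → ℝ)) := by
    rw [hκ', hcondint]; positivity
  rw [integral_sub (integrable_of_compl_null hK (hPQ hκP) L.continuous) (integrable_const c)] at t1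
  rw [integral_sub (integrable_const c) (integrable_of_compl_null hK (hPQ hκP') L.continuous)] at t2
  simp only [integral_const, probReal_univ, one_smul] at t1 t2
  linarith

end

/-! ### Densities with a concave power -/

section

open Set Filter Topology

/-- `ρ` is a bounded probability density on `ℝ`, carried by `[c, e]`, whose power `ρ ^ (1 / n)` is
concave where `ρ` is positive. -/
structure IsDens (n : ℕ) (ρ : ℝ → ℝ) (c e : ℝ) : Prop where
  nonneg : ∀ x, 0 ≤ ρ x
  zero : ∀ x, x ∉ Icc c e → ρ x = 0
  bdd : ∃ R, ∀ x, ρ x ≤ R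
  int : ∫ x, ρ x = 1
  conc : ∀ x y l α β : ℝ, 0 < l → l < 1 → 0 < α → 0 < β → α ^ n ≤ ρ x → β ^ n ≤ ρ y →
    (l * α + (1 - l) * β) ^ n ≤ ρ (l * x + (1 - l) * y)

variable {n : ℕ} {ρ : ℝ → ℝ} {c e : ℝ}

/-- Level sets of the density are intervals. -/
theorem IsDens.quasi (h : IsDens n ρ c e) (hn : 0 < n) {s : ℝ} (hs : 0 < s) :
    {x | s ≤ ρ x}.OrdConnected := by
  rw [← convex_iff_ordConnected (𝕜 := ℝ)]
  have hpow : (s ^ ((n : ℝ)⁻¹)) ^ n = s := Real.rpow_inv_natCast_pow hs.le hn.ne'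
  refine convex_iff_forall_pos.2 fun x hx y hy a b ha hb hab => ?_
  have := h.conc x y a _ _ ha (by linarith) (Real.rpow_pos_of_pos hs ((n : ℝ)⁻¹))
    (Real.rpow_pos_of_pos hs ((n : ℝ)⁻¹)) (hpow.le.trans hx) (hpow.le.trans hy)
  rw [← add_mul, add_sub_cancel, one_mul, hpow, show 1 - a = b by linarith] at this
  exact this

theorem IsDens.measurable (h : IsDens n ρ c e) (hn : 0 < n) : Measurable ρ := by
  refine measurable_of_Ici fun s => ?_
  rcases le_or_gt s 0 with hs | hs
  · convert MeasurableSet.univ using 1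
    exact eq_univ_of_forall fun x => hs.trans (h.nonneg x)
  · exact (h.quasi hn hs).measurableSet

theorem IsDens.integrable (h : IsDens n ρ c e) : Integrable ρ :=
  Integrable.of_integral_ne_zero (by rw [h.int]; exact one_ne_zero)

theorem IsDens.level_subset (h : IsDens n ρ c e) {s : ℝ} (hs : 0 < s) :
    {x | s ≤ ρ x} ⊆ Icc c e := by
  intro x hx
  by_contra hcon
  have hx' : s ≤ ρ x := hx
  rw [h.zero x hcon] at hx'
  linarith

theorem IsDens.markov (h : IsDens n ρ c e) (s : ℝ) : s * volume.real {x | s ≤ ρ x} ≤ 1 :=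
  h.int ▸ mul_meas_ge_le_integral_of_nonneg (ae_of_all _ h.nonneg) h.integrable s

/-- The supremum of the density need not be attained, but up to a factor `2` it is. -/
theorem IsDens.exists_peak (h : IsDens n ρ c e) : ∃ z, 0 < ρ z ∧ ∀ x, ρ x ≤ 2 * ρ z := by
  obtain ⟨R, hR⟩ := h.bdd
  have hb : BddAbove (range ρ) := ⟨R, by rintro _ ⟨x, rfl⟩; exact hR x⟩
  have hpos : ∃ x, 0 < ρ x := by
    by_contra! hcon
    have : ρ = fun _ => 0 := funext fun x => le_antisymm (hcon x) (h.nonneg x)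
    have h1 := h.int
    rw [this] at h1
    simp at h1
  obtain ⟨x, hx⟩ := hpos
  have hsup : 0 < sSup (range ρ) := hx.trans_le (le_csSup hb ⟨x, rfl⟩)
  obtain ⟨_, ⟨z, rfl⟩, hz⟩ := exists_lt_of_lt_csSup (range_nonempty ρ) (half_lt_self hsup)
  exact ⟨z, (half_pos hsup).trans hz, fun y => (le_csSup hb ⟨y, rfl⟩).trans (by linarith)⟩

/-- The `1 / n`-concavity implies log-concavity. -/
theorem IsDens.logconc (h : IsDens n ρ c e) (hn : 0 < n) {x y l : ℝ} (hx : 0 < ρ x) (hy : 0 < ρ y)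
    (hl : 0 < l) (hl1 : l < 1) : ρ x ^ l * ρ y ^ (1 - l) ≤ ρ (l * x + (1 - l) * y) := by
  set α := ρ x ^ ((n : ℝ)⁻¹) with hα
  set β := ρ y ^ ((n : ℝ)⁻¹) with hβ
  have hα0 : 0 < α := Real.rpow_pos_of_pos hx _
  have hβ0 : 0 < β := Real.rpow_pos_of_pos hy _
  have hαn : α ^ n = ρ x := Real.rpow_inv_natCast_pow hx.le hn.ne'
  have hβn : β ^ n = ρ y := Real.rpow_inv_natCast_pow hy.le hn.ne'
  have h1 := h.conc x y l α β hl hl1 hα0 hβ0 hαn.le hβn.le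
  have h2 := Real.geom_mean_le_arith_mean2_weighted hl.le (sub_nonneg.2 hl1.le) hα0.le hβ0.le
    (add_sub_cancel _ _)
  refine le_trans (le_of_eq ?_) ((pow_le_pow_left₀ (by positivity) h2 n).trans h1)
  rw [← hαn, ← hβn, mul_pow, ← Real.rpow_natCast α, ← Real.rpow_natCast β,
    ← Real.rpow_natCast (α ^ l), ← Real.rpow_natCast (β ^ (1 - l)), ← Real.rpow_mul hα0.le,
    ← Real.rpow_mul hα0.le, ← Real.rpow_mul hβ0.le, ← Real.rpow_mul hβ0.le, mul_comm l,
    mul_comm (1 - l)]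

/-- A contraction towards a point maps one level set into another, so their lengths compare. -/
theorem IsDens.level_scale (h : IsDens n ρ c e) {s s' z l : ℝ} (hs' : 0 < s') (hl : 0 < l)
    (hsub : ∀ y, s ≤ ρ y → s' ≤ ρ ((1 - l) * z + l * y)) :
    l * volume.real {x | s ≤ ρ x} ≤ volume.real {x | s' ≤ ρ x} := by
  have h1 : AffineMap.homothety z l '' {x | s ≤ ρ x} ⊆ {x | s' ≤ ρ x} := by
    rintro _ ⟨y, hy, rfl⟩
    have := hsub y hy
    rw [mem_ofPred_eq, AffineMap.homothety_apply]
    convert this using 2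
    simp only [vsub_eq_sub, smul_eq_mul, vadd_eq_add]
    ring
  have h2 := measureReal_mono (μ := volume) h1
    ((measure_mono (h.level_subset hs')).trans_lt measure_Icc_lt_top).ne
  rw [measureReal_def, Measure.addHaar_image_homothety, ENNReal.toReal_mul,
    ENNReal.toReal_ofReal (abs_nonneg _)] at h2
  simpa [abs_of_pos hl, measureReal_def] using h2

/-- The level sets are of length at most of order `n / ρ(z)`, at every level: a contraction
towards `z` by the factor `1 / (2n)` moves any point where `ρ` is positive into `{ρ ≥ ρ(z) / 2}`,
since `(1 - 1 / (2n)) ^ n ≥ 1 / 2`. -/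
theorem IsDens.level_le_dim (h : IsDens n ρ c e) (hn : 0 < n) {z s : ℝ} (hz : 0 < ρ z)
    (hs : 0 < s) : ρ z * volume.real {x | s ≤ ρ x} ≤ 4 * n := by
  have hn' : (1 : ℝ) ≤ n := by exact_mod_cast hn
  set l : ℝ := 1 / (2 * n) with hl
  have hl0 : 0 < l := by positivity
  have hnl : n * l = 1 / 2 := by rw [hl]; field_simp
  have hl1 : l ≤ 1 / 2 := by nlinarith
  have key := h.level_scale (s := s) (z := z) (half_pos hz) hl0 (fun y hy => by
    have hpow : (s ^ ((n : ℝ)⁻¹)) ^ n = s := Real.rpow_inv_natCast_pow hs.le hn.ne'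
    have hpow' : (ρ z ^ ((n : ℝ)⁻¹)) ^ n = ρ z := Real.rpow_inv_natCast_pow hz.le hn.ne'
    have hα := Real.rpow_pos_of_pos hz ((n : ℝ)⁻¹)
    have hβ := Real.rpow_pos_of_pos hs ((n : ℝ)⁻¹)
    have h1 := h.conc z y (1 - l) _ _ (by linarith) (by linarith) hα hβ hpow'.le (hpow.le.trans hy)
    rw [sub_sub_cancel] at h1
    refine le_trans ?_ h1
    calc ρ z / 2 ≤ (1 - l) ^ n * ρ z := by
          have := one_add_mul_le_pow (a := -l) (by linarith) n
          rw [← sub_eq_add_neg] at this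
          nlinarith
      _ = ((1 - l) * ρ z ^ ((n : ℝ)⁻¹)) ^ n := by rw [mul_pow, hpow']
      _ ≤ _ := by
          refine pow_le_pow_left₀ (mul_nonneg (by linarith) hα.le) ?_ n
          have := mul_pos hl0 hβ
          linarith)
  have hm := h.markov (ρ z / 2)
  have h3 : ρ z / 2 * (l * volume.real {x | s ≤ ρ x}) ≤ 1 :=
    (mul_le_mul_of_nonneg_left key (half_pos hz).le).trans hm
  calc ρ z * volume.real {x | s ≤ ρ x}
      = 4 * n * (ρ z / 2 * (l * volume.real {x | s ≤ ρ x})) := by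
        rw [hl]; field_simp; norm_num
    _ ≤ 4 * n * 1 := mul_le_mul_of_nonneg_left h3 (by positivity)
    _ = 4 * n := mul_one _

/-- The level set `{ρ ≥ s}` is of length at most of order `(1 + log(2 ρ(z) / s)) / ρ(z)`, whatever `n`:
by log-concavity a contraction towards `z` by the factor `1 / (1 + log(2 ρ(z) / s))` moves it into
`{ρ ≥ ρ(z) / e}`. -/
theorem IsDens.level_le_log (h : IsDens n ρ c e) (hn : 0 < n) {z s : ℝ} (hz : 0 < ρ z)
    (hs : 0 < s) (hs2 : s ≤ 2 * ρ z) :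
    ρ z * volume.real {x | s ≤ ρ x} ≤ 3 * (1 + Real.log (2 * ρ z / s)) := by
  have hlog : 0 ≤ Real.log (2 * ρ z / s) := Real.log_nonneg ((one_le_div hs).2 hs2)
  rcases le_or_gt (ρ z) s with hzs | hzs
  · have := h.markov s
    have h2 := mul_le_mul_of_nonneg_right hzs (measureReal_nonneg (μ := volume) (s := {x | s ≤ ρ x}))
    linarith
  have hlog' : 0 < Real.log (2 * ρ z / s) := Real.log_pos ((one_lt_div hs).2 (by linarith))
  set k := 1 + Real.log (2 * ρ z / s) with hk
  have hk1 : 1 < k := by linarith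
  have hl0 : 0 < 1 / k := by positivity
  have hl1 : 1 / k < 1 := (div_lt_one (by positivity)).2 hk1
  have key := h.level_scale (s := s) (z := z) (s' := ρ z * Real.exp (-1)) (by positivity) hl0
    (fun y hy => by
      have hy0 : 0 < ρ y := hs.trans_le hy
      have h1 := h.logconc hn hz hy0 (l := 1 - 1 / k) (by linarith) (by linarith)
      rw [sub_sub_cancel] at h1
      refine le_trans ?_ h1
      calc ρ z * Real.exp (-1) ≤ ρ z * (s / ρ z) ^ (1 / k) := by
            refine mul_le_mul_of_nonneg_left ?_ hz.le
            rw [Real.rpow_def_of_pos (by positivity), Real.exp_le_exp, Real.log_div hs.ne' hz.ne']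
            have h2 : Real.log (2 * ρ z / s) = Real.log 2 + Real.log (ρ z) - Real.log s := by
              rw [Real.log_div (by positivity) hs.ne', Real.log_mul two_ne_zero hz.ne']
            have h3 : 0 < Real.log 2 := Real.log_pos one_lt_two
            rw [mul_one_div, le_div_iff₀ (by positivity)]
            linarith
        _ = ρ z ^ (1 - 1 / k) * s ^ (1 / k) := by
            rw [Real.div_rpow hs.le hz.le, Real.rpow_sub hz, Real.rpow_one]
            ring
        _ ≤ _ := mul_le_mul_of_nonneg_left (Real.rpow_le_rpow hs.le hy hl0.le)
            (Real.rpow_nonneg hz.le _))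
  have hm := h.markov (ρ z * Real.exp (-1))
  have h3 : ρ z * Real.exp (-1) * (1 / k * volume.real {x | s ≤ ρ x}) ≤ 1 :=
    (mul_le_mul_of_nonneg_left key (by positivity)).trans hm
  have he : Real.exp 1 ≤ 3 := Real.exp_one_lt_d9.le.trans (by norm_num)
  calc ρ z * volume.real {x | s ≤ ρ x}
      = Real.exp 1 * k * (ρ z * Real.exp (-1) * (1 / k * volume.real {x | s ≤ ρ x})) := by
        rw [Real.exp_neg]; field_simp
    _ ≤ Real.exp 1 * k * 1 := mul_le_mul_of_nonneg_left h3 (by positivity)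
    _ ≤ 3 * k := by rw [mul_one]; exact mul_le_mul_of_nonneg_right he (by linarith)

/-- Contracting towards the near-maximum `z` by the factor `1 / 2` turns `√(ρ z ρ)` into a
function below `ρ`. -/
theorem IsDens.sqrt_integral (h : IsDens n ρ c e) (hn : 0 < n) {z : ℝ} (hz : 0 < ρ z) :
    Integrable (fun x => √(ρ z * ρ x)) ∧ ∫ x, √(ρ z * ρ x) ≤ 2 := by
  have hle : ∀ x, √(ρ z * ρ x) ≤ ρ (1 / 2 * x + 1 / 2 * z) := by
    intro x
    rcases (h.nonneg x).eq_or_lt with hx | hx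
    · rw [← hx, mul_zero, Real.sqrt_zero]; exact h.nonneg _
    · have := h.logconc hn hz hx (l := 1 / 2) (by norm_num) (by norm_num)
      rw [show (1 : ℝ) - 1 / 2 = 1 / 2 by norm_num, ← Real.mul_rpow hz.le hx.le,
        ← Real.sqrt_eq_rpow, add_comm] at this
      exact this
  have hint : Integrable (fun x => ρ (1 / 2 * x + 1 / 2 * z)) :=
    (h.integrable.comp_add_right (1 / 2 * z)).comp_mul_left' (by norm_num : (1 / 2 : ℝ) ≠ 0)
  have hmeas := h.measurable hn
  refine ⟨hint.mono' (by fun_prop) (ae_of_all _ fun x => ?_), ?_⟩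
  · rw [Real.norm_of_nonneg (Real.sqrt_nonneg _)]; exact hle x
  · refine (integral_mono_of_nonneg (ae_of_all _ fun x => Real.sqrt_nonneg _) hint
      (ae_of_all _ hle)).trans (le_of_eq ?_)
    rw [Measure.integral_comp_mul_left (fun y => ρ (y + 1 / 2 * z)) (1 / 2),
      integral_add_right_eq_self (μ := volume) ρ, h.int]
    norm_num

/-- The moment bound: `R |{ρ ≥ ρ(x)}|` is of order at most `min d n` in `L^{2d}(ρ)`, where `R` is
an upper bound for `ρ` of the order of its maximum. For `n ≤ d` the quantity is of order `n`
everywhere. For `d ≤ n` it is logarithmic in `R / ρ(x)`; the inequality `1 + t ≤ exp t` at scale `d`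
bounds its power of order `2d` by a multiple of `√(R / ρ(x))`, which is integrable against `ρ`. The
function `w` is an integrable majorant. -/
theorem IsDens.moment (h : IsDens n ρ c e) (hn : 0 < n) {d : ℕ} (hd : 0 < d) {z : ℝ} (hz : 0 < ρ z)
    (hmax : ∀ x, ρ x ≤ 2 * ρ z) : ∃ w : ℝ → ℝ, Integrable w ∧
      (∀ x, 0 < ρ x → (1 + 2 * ρ z * volume.real {y | ρ x ≤ ρ y}) ^ (2 * d) * ρ x ≤ w x) ∧
      (∀ x, 0 ≤ w x) ∧
      ∫ x, w x ≤ (144 * min (d : ℝ) n) ^ (2 * d) := by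
  have hn' : (1 : ℝ) ≤ n := by exact_mod_cast hn
  have hd' : (1 : ℝ) ≤ d := by exact_mod_cast hd
  rcases le_total (n : ℝ) d with hnd | hnd
  · refine ⟨fun x => (9 * n) ^ (2 * d) * ρ x, h.integrable.const_mul _, fun x hx => ?_,
      fun x => mul_nonneg (by positivity) (h.nonneg x), ?_⟩
    · refine mul_le_mul_of_nonneg_right (pow_le_pow_left₀ (by positivity) ?_ _) hx.le
      have := h.level_le_dim hn hz hx
      linarith
    · rw [integral_const_mul, h.int, mul_one, min_eq_right hnd]
      exact pow_le_pow_left₀ (by positivity) (by linarith) _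
  · obtain ⟨hI, hI2⟩ := h.sqrt_integral hn hz
    refine ⟨fun x => (24 * d) ^ (2 * d) * 3 * √(ρ z * ρ x), hI.const_mul _, fun x hx => ?_,
      fun x => by positivity, ?_⟩
    · set y := Real.log (2 * ρ z / ρ x) with hy
      have hy0 : 0 ≤ y := Real.log_nonneg ((one_le_div hx).2 (hmax x))
      have h1 := h.level_le_log hn hz hx (hmax x)
      rw [← hy] at h1
      have h2 : 1 + 2 * ρ z * volume.real {y | ρ x ≤ ρ y} ≤ 24 * d * Real.exp ((7 + 6 * y) / (24 * d)) := by
        have := Real.add_one_le_exp ((7 + 6 * y) / (24 * d))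
        calc 1 + 2 * ρ z * volume.real {y | ρ x ≤ ρ y} ≤ 7 + 6 * y := by linarith
          _ = 24 * d * ((7 + 6 * y) / (24 * d)) := by field_simp
          _ ≤ _ := mul_le_mul_of_nonneg_left (by linarith) (by positivity)
      have h3 := pow_le_pow_left₀ (by positivity) h2 (2 * d)
      have h4 : Real.exp ((7 + 6 * y) / (24 * d)) ^ (2 * d) = Real.exp (7 / 12) * Real.exp (y / 2) := by
        rw [← Real.exp_nat_mul, ← Real.exp_add]
        congr 1
        push_cast
        field_simp
        ring
      have h5 : Real.exp (y / 2) = √(2 * ρ z / ρ x) := by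
        rw [Real.sqrt_eq_rpow, Real.rpow_def_of_pos (by positivity), ← hy]
        congr 1; ring
      have h6 : √(2 * ρ z / ρ x) * ρ x = √2 * √(ρ z * ρ x) := by
        rw [← Real.sqrt_mul zero_le_two, eq_comm, Real.sqrt_eq_iff_mul_self_eq (by positivity) (by positivity),
          mul_mul_mul_comm, Real.mul_self_sqrt (by positivity)]
        field_simp
      have h7 : Real.exp (7 / 12) * √2 ≤ 3 := by
        have e1 : √2 ≤ 3 / 2 := Real.sqrt_le_iff.2 ⟨by norm_num, by norm_num⟩
        have e2 : Real.exp (7 / 12) ≤ 2 := by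
          rw [← Real.le_log_iff_exp_le two_pos]
          have := Real.log_two_gt_d9
          linarith
        have := Real.exp_pos (7 / 12)
        nlinarith [Real.sqrt_nonneg 2]
      rw [mul_pow, h4, h5] at h3
      calc _ ≤ (24 * d) ^ (2 * d) * (Real.exp (7 / 12) * √(2 * ρ z / ρ x)) * ρ x :=
            mul_le_mul_of_nonneg_right h3 hx.le
        _ = (24 * d) ^ (2 * d) * (Real.exp (7 / 12) * √2) * √(ρ z * ρ x) := by
            rw [mul_assoc, mul_assoc (Real.exp _), h6]; ring
        _ ≤ _ := mul_le_mul_of_nonneg_right (mul_le_mul_of_nonneg_left h7 (by positivity))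
            (Real.sqrt_nonneg _)
    · rw [integral_const_mul, min_eq_left hnd]
      calc (24 * (d : ℝ)) ^ (2 * d) * 3 * ∫ x, √(ρ z * ρ x) ≤ (24 * (d : ℝ)) ^ (2 * d) * 3 * 2 := by
            gcongr
        _ = (24 * (d : ℝ)) ^ (2 * d) * 6 := by ring
        _ ≤ (24 * (d : ℝ)) ^ (2 * d) * 6 ^ (2 * d) := by
            gcongr
            exact le_self_pow₀ (by norm_num) (by omega)
        _ = _ := by rw [← mul_pow]; ring

end

/-! ### The one-dimensional estimate for densities -/

section

open Set Filter Topology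

/-- The layer cake formula for a weighted integral; the inner integral over level sets is an
integrable function of the level. -/
theorem IsDens.layer_cake {n : ℕ} {ρ : ℝ → ℝ} {c e : ℝ} (h : IsDens n ρ c e) (hn : 0 < n) {R : ℝ}
    (hR : ∀ x, ρ x ≤ R) {g : ℝ → ℝ} (hg : Measurable g) (hg1 : ∀ x, |g x| ≤ 1) :
    IntegrableOn (fun u => ∫ x in {x | u ≤ ρ x}, g x) (Ioc 0 R) ∧
      ∫ x, g x * ρ x = ∫ u in Ioc 0 R, ∫ x in {x | u ≤ ρ x}, g x := by
  have hρ := h.measurable hn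
  set f : ℝ → ℝ → ℝ := fun u x => {x | u ≤ ρ x}.indicator g x with hf
  have hfm : Measurable (Function.uncurry f) := by
    have : Function.uncurry f = {q : ℝ × ℝ | q.1 ≤ ρ q.2}.indicator (fun q => g q.2) := by
      ext ⟨u, x⟩; rfl
    rw [this]
    exact (hg.comp measurable_snd).indicator (measurableSet_le measurable_fst (hρ.comp measurable_snd))
  have hint : Integrable (Function.uncurry f)
      ((volume.restrict (Ioc 0 R)).prod (volume.restrict (Icc c e))) := by
    refine Integrable.of_bound hfm.aestronglyMeasurable 1 (ae_of_all _ fun ⟨u, x⟩ => ?_)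
    change ‖{x | u ≤ ρ x}.indicator g x‖ ≤ 1
    exact (norm_indicator_le_norm_self _ _).trans (hg1 x)
  have inner : ∀ u ∈ Ioc 0 R, ∫ x in Icc c e, f u x = ∫ x in {x | u ≤ ρ x}, g x := by
    intro u hu
    rw [hf]
    simp only
    rw [setIntegral_indicator (h.quasi hn hu.1).measurableSet,
      inter_eq_self_of_subset_right (h.level_subset hu.1)]
  have outer : ∀ x, ∫ u in Ioc 0 R, f u x = g x * ρ x := by
    intro x
    have : (fun u => f u x) = (Iic (ρ x)).indicator (fun _ => g x) := by
      ext u; rfl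
    rw [this, setIntegral_indicator measurableSet_Iic, setIntegral_const, Ioc_inter_Iic,
      min_eq_right (hR x), Real.volume_real_Ioc_of_le (h.nonneg x), sub_zero, smul_eq_mul, mul_comm]
  refine ⟨hint.integral_prod_left.congr ?_, ?_⟩
  · exact (ae_restrict_iff' measurableSet_Ioc).2 (ae_of_all _ inner)
  · rw [← setIntegral_congr_fun measurableSet_Ioc inner, integral_integral_swap hint]
    simp_rw [outer]
    refine (setIntegral_eq_integral_of_forall_compl_eq_zero fun x hx => ?_).symm
    rw [h.zero x hx, mul_zero]

/-- The oscillation estimate on bounded intervals that need not be closed. -/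
theorem abs_setIntegral_le_osc {p : Polynomial ℝ} {d : ℕ} (hd : 0 < d) (hp : p.natDegree ≤ d)
    {G G' : ℝ → ℝ} {ε : ℝ} (hε : 0 < ε) (hG : ∀ t, HasDerivAt G (G' t) t) (hG' : Continuous G')
    (hGε : ∀ t, |G t| ≤ ε) (hG1 : ∀ t, |G' t| ≤ 1) {S S' : Set ℝ} (hS : S.OrdConnected)
    (hS' : S'.OrdConnected) (hSS : S' ⊆ S) (hSb : BddBelow S) (hSa : BddAbove S) {x y M : ℝ}
    (hM : 0 < M) (hx : x ∈ S) (hy : y ∈ S) (hxy : M ≤ |p.eval x - p.eval y|) :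
    |∫ t in S', G' (p.eval t)| ≤ 190 * volume.real S * (ε / M) ^ (1 / (d : ℝ)) := by
  have hae : ∀ T : Set ℝ, T.OrdConnected → T.Nonempty → BddBelow T → BddAbove T →
      T =ᵐ[volume] Icc (sInf T) (sSup T) := by
    intro T hT hTn hTb hTa
    have h1 : T ⊆ Icc (sInf T) (sSup T) := fun t ht => ⟨csInf_le hTb ht, le_csSup hTa ht⟩
    have h2 : Ioo (sInf T) (sSup T) ⊆ T :=
      IsConnected.Ioo_csInf_csSup_subset ⟨hTn, hT.isPreconnected⟩ hTb hTa
    exact h1.eventuallyLE.antisymm (Ioo_ae_eq_Icc.symm.le.trans h2.eventuallyLE)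
  rcases S'.eq_empty_or_nonempty with rfl | hne
  · simp only [Measure.restrict_empty, integral_zero_measure, abs_zero]
    positivity
  have hb' := hSb.mono hSS
  have ha' := hSa.mono hSS
  have hle' : sInf S' ≤ sSup S' := csInf_le_csSup hne hb' ha'
  have hle : sInf S ≤ sSup S := csInf_le_csSup ⟨x, hx⟩ hSb hSa
  have hvol : volume.real S = sSup S - sInf S := by
    rw [measureReal_congr (hae S hS ⟨x, hx⟩ hSb hSa), Real.volume_real_Icc_of_le hle]
  rw [setIntegral_congr_set (hae S' hS' hne hb' ha'), integral_Icc_eq_integral_Ioc,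
    ← intervalIntegral.integral_of_le hle', hvol]
  exact abs_integral_le_osc hd hp hε hG hG' hGε hG1 hM ⟨csInf_le hSb hx, le_csSup hSa hx⟩
    ⟨csInf_le hSb hy, le_csSup hSa hy⟩ hxy (csInf_le_csInf hSb hne hSS) hle'
    (csSup_le_csSup hSa hne hSS)

/-- The one-dimensional estimate for densities.  By the layer cake formula the integral of
`G' ∘ p` is an average of its integrals over the level sets `{u ≤ ρ}`; only level sets meeting
`{p ≤ m}` contribute, and on those containing also a given point `x` the oscillation of `p` is at
least `p x - m`. -/
theorem IsDens.main {n : ℕ} {ρ : ℝ → ℝ} {c e : ℝ} (h : IsDens n ρ c e) (hn : 0 < n)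
    {p : Polynomial ℝ} {d : ℕ} (hd : 0 < d) (hp : p.natDegree ≤ d)
    {G G' : ℝ → ℝ} {ε m : ℝ} (hε : 0 < ε) (hG : ∀ t, HasDerivAt G (G' t) t) (hG' : Continuous G')
    (hGε : ∀ t, |G t| ≤ ε) (hG1 : ∀ t, |G' t| ≤ 1) (hGm : ∀ t, m ≤ t → G' t = 0) :
    (∫ x, max (p.eval x - m) 0 ^ 2 * ρ x) * max (∫ x, G' (p.eval x) * ρ x) 0 ^ (2 * d) ≤
      (27360 * min (d : ℝ) n) ^ (2 * d) * ε ^ 2 := by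
  obtain ⟨z, hz, hmax⟩ := h.exists_peak
  obtain ⟨w, hwi, hw, hw0, hwB⟩ := h.moment hn hd hz hmax
  set T := ∫ x, G' (p.eval x) * ρ x with hT
  have hcont : Continuous fun x => G' (p.eval x) := hG'.comp p.continuous
  -- `T` is estimated with an arbitrary reference point `x` where `p x > m`; the `2d`-th power of
  -- this bound is then averaged over `x`
  have key : ∀ x, 0 < ρ x → 0 < p.eval x - m → T ≤ 190 * (ε / (p.eval x - m)) ^ (1 / (d : ℝ)) *
      (1 + 2 * ρ z * volume.real {y | ρ x ≤ ρ y}) := by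
    intro x hx hq
    obtain ⟨-, h2⟩ := h.layer_cake hn hmax hcont.measurable (fun x => hG1 _)
    obtain ⟨h3, h4⟩ := h.layer_cake hn hmax (g := fun _ => 1) measurable_const (by simp)
    simp only [one_mul, h.int, setIntegral_const, smul_eq_mul, mul_one] at h3 h4
    set κ := (ε / (p.eval x - m)) ^ (1 / (d : ℝ)) with hκ
    have hκ0 : 0 ≤ κ := by positivity
    have hbound : ∀ u ∈ Ioc 0 (2 * ρ z), ‖∫ y in {y | u ≤ ρ y}, G' (p.eval y)‖ ≤
        190 * κ * (volume.real {y | u ≤ ρ y} + volume.real {y | ρ x ≤ ρ y}) := by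
      intro u hu
      rw [Real.norm_eq_abs]
      have hv1 := measureReal_nonneg (μ := volume) (s := {y | u ≤ ρ y})
      have hv2 := measureReal_nonneg (μ := volume) (s := {y | ρ x ≤ ρ y})
      by_cases hZ : ∃ y, u ≤ ρ y ∧ p.eval y ≤ m
      · obtain ⟨y, hy, hym⟩ := hZ
        have hosc : p.eval x - m ≤ |p.eval x - p.eval y| :=
          (by linarith : p.eval x - m ≤ p.eval x - p.eval y).trans (le_abs_self _)
        rcases le_total u (ρ x) with hux | hux
        · have := abs_setIntegral_le_osc hd hp hε hG hG' hGε hG1 (h.quasi hn hu.1) (h.quasi hn hu.1)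
            subset_rfl (bddBelow_Icc.mono (h.level_subset hu.1))
            (bddAbove_Icc.mono (h.level_subset hu.1)) hq (x := x) (y := y) hux hy hosc
          refine this.trans ?_
          rw [← hκ]
          have := mul_nonneg hκ0 hv2
          linarith
        · have hsub : {y | u ≤ ρ y} ⊆ {y | ρ x ≤ ρ y} := fun t (ht : u ≤ ρ t) => hux.trans ht
          have := abs_setIntegral_le_osc hd hp hε hG hG' hGε hG1 (h.quasi hn hx) (h.quasi hn hu.1)
            hsub (bddBelow_Icc.mono (h.level_subset hx))
            (bddAbove_Icc.mono (h.level_subset hx)) hq (x := x) (y := y) (le_refl (ρ x)) (hsub hy) hosc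
          refine this.trans ?_
          rw [← hκ]
          have := mul_nonneg hκ0 hv1
          linarith
      · push Not at hZ
        have h0 : ∫ y in {y | u ≤ ρ y}, G' (p.eval y) = 0 :=
          setIntegral_eq_zero_of_forall_eq_zero fun y hy => hGm _ (hZ y hy).le
        rw [h0, abs_zero]
        positivity
    have hI : IntegrableOn (fun u => 190 * κ * (volume.real {y | u ≤ ρ y} +
        volume.real {y | ρ x ≤ ρ y})) (Ioc 0 (2 * ρ z)) :=
      (h3.add (integrable_const _)).const_mul _
    have h5 := norm_integral_le_of_norm_le hI ((ae_restrict_iff' measurableSet_Ioc).2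
      (ae_of_all _ hbound))
    rw [← h2, integral_const_mul, integral_add h3 (integrable_const _), ← h4, setIntegral_const,
      Real.volume_real_Ioc_of_le (by positivity), sub_zero, smul_eq_mul] at h5
    exact (le_abs_self _).trans h5
  have hpt : ∀ x, max T 0 ^ (2 * d) * (max (p.eval x - m) 0 ^ 2 * ρ x) ≤
      190 ^ (2 * d) * ε ^ 2 * w x := by
    intro x
    have hr : 0 ≤ 190 ^ (2 * d) * ε ^ 2 * w x := mul_nonneg (by positivity) (hw0 x)
    rcases (h.nonneg x).eq_or_lt with hx | hx
    · rw [← hx, mul_zero, mul_zero]; exact hr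
    rcases le_or_gt T 0 with hT0 | hT0
    · rw [max_eq_right hT0, zero_pow (by omega), zero_mul]; exact hr
    rcases le_or_gt (p.eval x - m) 0 with hq | hq
    · rw [max_eq_right hq, zero_pow two_ne_zero, zero_mul, mul_zero]; exact hr
    rw [max_eq_left hT0.le, max_eq_left hq.le]
    set q := p.eval x - m with hq'
    have h1 := pow_le_pow_left₀ hT0.le (key x hx hq) (2 * d)
    have h2 : ((ε / q) ^ (1 / (d : ℝ))) ^ (2 * d) = (ε / q) ^ 2 := by
      rw [mul_comm, pow_mul, one_div, Real.rpow_inv_natCast_pow (by positivity) hd.ne']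
    rw [mul_pow, mul_pow, h2] at h1
    calc T ^ (2 * d) * (q ^ 2 * ρ x) ≤ (190 ^ (2 * d) * (ε / q) ^ 2 *
          (1 + 2 * ρ z * volume.real {y | ρ x ≤ ρ y}) ^ (2 * d)) * (q ^ 2 * ρ x) :=
          mul_le_mul_of_nonneg_right h1 (by positivity)
      _ = 190 ^ (2 * d) * ε ^ 2 * ((1 + 2 * ρ z * volume.real {y | ρ x ≤ ρ y}) ^ (2 * d) * ρ x) := by
          field_simp
      _ ≤ _ := mul_le_mul_of_nonneg_left (hw x hx) (by positivity)
  have h6 := integral_mono_of_nonneg (ae_of_all _ fun x => ?_) (hwi.const_mul (190 ^ (2 * d) * ε ^ 2))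
    (ae_of_all volume hpt)
  · rw [integral_const_mul, integral_const_mul] at h6
    calc _ = max T 0 ^ (2 * d) * ∫ x, max (p.eval x - m) 0 ^ 2 * ρ x := mul_comm _ _
      _ ≤ 190 ^ (2 * d) * ε ^ 2 * ∫ x, w x := h6
      _ ≤ 190 ^ (2 * d) * ε ^ 2 * (144 * min (d : ℝ) n) ^ (2 * d) :=
          mul_le_mul_of_nonneg_left hwB (by positivity)
      _ = _ := by rw [mul_right_comm, ← mul_pow]; congr 2; ring
  · have := h.nonneg x
    simp only [Pi.zero_apply]
    positivity

end

/-! ### Smoothing of one-dimensional measures -/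

section

open Set Filter Topology

/-- The density of the convolution of `ν` with the uniform distribution on `[0, h]`. -/
def smoothDens (ν : Measure ℝ) (h t : ℝ) : ℝ := ν.real (Icc (t - h) t) / h

theorem smoothDens_zero {ν : Measure ℝ} {a b : ℝ} (hab : ν (Icc a b)ᶜ = 0) {h : ℝ}
    {t : ℝ} (ht : t ∉ Icc a (b + h)) : smoothDens ν h t = 0 := by
  have : Icc (t - h) t ⊆ (Icc a b)ᶜ := fun s hs hs' =>
    ht ⟨hs'.1.trans hs.2, by linarith [hs.1, hs'.2]⟩
  rw [smoothDens, measureReal_def, measure_mono_null this hab, ENNReal.toReal_zero, zero_div]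

/-- Integration against the convolution, by Fubini's theorem. -/
theorem integral_smoothDens {ν : Measure ℝ} [IsProbabilityMeasure ν] {a b : ℝ}
    (hab : ν (Icc a b)ᶜ = 0) {h : ℝ} {ψ : ℝ → ℝ} (hψ : Continuous ψ) :
    Integrable (fun s => (∫ t in Icc s (s + h), ψ t) / h) ν ∧
      ∫ t, ψ t * smoothDens ν h t = ∫ s, (∫ t in Icc s (s + h), ψ t) / h ∂ν := by
  obtain ⟨C, hC⟩ := (isCompact_Icc (a := a) (b := b + h)).exists_bound_of_continuousOn
    hψ.continuousOn
  set f : ℝ → ℝ → ℝ := fun s t => (Icc s (s + h)).indicator ψ t with hf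
  have hfm : Measurable (Function.uncurry f) := by
    have : Function.uncurry f =
        {q : ℝ × ℝ | q.1 ≤ q.2 ∧ q.2 ≤ q.1 + h}.indicator (fun q => ψ q.2) := by
      ext ⟨u, x⟩; rfl
    rw [this]
    exact (hψ.measurable.comp measurable_snd).indicator
      ((measurableSet_le measurable_fst measurable_snd).inter
        (measurableSet_le measurable_snd (measurable_fst.add_const h)))
  have hint : Integrable (Function.uncurry f) (ν.prod (volume.restrict (Icc a (b + h)))) := by
    refine Integrable.of_bound hfm.aestronglyMeasurable C ?_
    have : ∀ᵐ q ∂(ν.prod (volume.restrict (Icc a (b + h)))), q.2 ∈ Icc a (b + h) :=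
      Measure.quasiMeasurePreserving_snd.ae (ae_restrict_mem measurableSet_Icc)
    filter_upwards [this] with q hq
    exact (norm_indicator_le_norm_self _ _).trans (hC _ hq)
  have hs : ∀ᵐ s ∂ν, s ∈ Icc a b := hab
  have inner : ∀ᵐ s ∂ν, ∫ t in Icc a (b + h), f s t = ∫ t in Icc s (s + h), ψ t := by
    filter_upwards [hs] with s hs
    rw [hf]
    simp only
    rw [setIntegral_indicator measurableSet_Icc, inter_eq_self_of_subset_right]
    exact Icc_subset_Icc hs.1 (by linarith [hs.2])
  have outer : ∀ t, ∫ s, f s t ∂ν = ψ t * ν.real (Icc (t - h) t) := by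
    intro t
    have : (fun s => f s t) = (Icc (t - h) t).indicator (fun _ => ψ t) := by
      ext s
      simp only [hf, indicator_apply, mem_Icc]
      congr 1
      refine propext ⟨fun hh => ⟨by linarith, hh.1⟩, fun hh => ⟨hh.2, by linarith⟩⟩
    rw [this, integral_indicator measurableSet_Icc, setIntegral_const, smul_eq_mul, mul_comm]
  refine ⟨(hint.integral_prod_left.congr inner).div_const h, ?_⟩
  rw [integral_div, ← integral_congr_ae inner, integral_integral_swap hint]
  simp_rw [outer]
  rw [← integral_div, setIntegral_eq_integral_of_forall_compl_eq_zero]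
  · simp_rw [smoothDens, mul_div_assoc]
  · intro t ht
    have := smoothDens_zero hab ht
    rw [mul_div_assoc]
    rw [smoothDens] at this
    rw [this, mul_zero]

/-- The Brunn–Minkowski inequality for intervals of length `h` says that the smoothed measure has a
density with concave power `1 / n`. -/
theorem isDens_smoothDens {n : ℕ} (hn : 0 < n) {ν : Measure ℝ} [IsProbabilityMeasure ν]
    (hν : BM n ν) {a b : ℝ} (hab : ν (Icc a b)ᶜ = 0) {h : ℝ} (hh : 0 < h) :
    IsDens n (smoothDens ν h) a (b + h) where
  nonneg x := by unfold smoothDens; positivity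
  zero x hx := smoothDens_zero hab hx
  bdd := ⟨1 / h, fun x => div_le_div_of_nonneg_right measureReal_le_one hh.le⟩
  int := by
    have := (integral_smoothDens hab (h := h) (ψ := fun _ => 1) continuous_const).2
    simp only [one_mul] at this
    rw [this]
    simp [hh.le, hh.ne']
  conc x y l α β hl hl1 hα hβ hαx hβy := by
    have hr : (h ^ ((n : ℝ)⁻¹)) ^ n = h := Real.rpow_inv_natCast_pow hh.le hn.ne'
    set r := h ^ ((n : ℝ)⁻¹)
    have hr0 : 0 < r := Real.rpow_pos_of_pos hh _
    have h1 := hν (Icc (x - h) x) (Icc (y - h) y) isCompact_Icc isCompact_Icc l (r * α) (r * β)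
      hl hl1 (mul_pos hr0 hα) (mul_pos hr0 hβ)
      (by rw [mul_pow, hr, mul_comm]; exact (le_div_iff₀ hh).1 hαx)
      (by rw [mul_pow, hr, mul_comm]; exact (le_div_iff₀ hh).1 hβy)
    have h2 : comb l (Icc (x - h) x) (Icc (y - h) y) ⊆
        Icc (l * x + (1 - l) * y - h) (l * x + (1 - l) * y) := by
      rintro _ ⟨⟨s, t⟩, ⟨hs, ht⟩, rfl⟩
      have hl' := sub_pos.2 hl1
      simp only [mem_Icc, smul_eq_mul] at hs ht ⊢
      have e1 := mul_le_mul_of_nonneg_left hs.1 hl.le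
      have e2 := mul_le_mul_of_nonneg_left hs.2 hl.le
      have e3 := mul_le_mul_of_nonneg_left ht.1 hl'.le
      have e4 := mul_le_mul_of_nonneg_left ht.2 hl'.le
      constructor <;> linarith
    have h3 := h1.trans (measureReal_mono h2)
    rw [smoothDens, le_div_iff₀ hh]
    refine le_trans (le_of_eq ?_) h3
    rw [show l * (r * α) + (1 - l) * (r * β) = r * (l * α + (1 - l) * β) by ring, mul_pow, hr,
      mul_comm]

/-- The smoothed measures converge weakly to `ν` as `h` decreases to `0`. -/
theorem tendsto_smoothDens {ν : Measure ℝ} [IsProbabilityMeasure ν] {a b : ℝ}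
    (hab : ν (Icc a b)ᶜ = 0) {ψ : ℝ → ℝ} (hψ : Continuous ψ) :
    Tendsto (fun h => ∫ t, ψ t * smoothDens ν h t) (𝓝[>] 0) (𝓝 (∫ t, ψ t ∂ν)) := by
  have hψi : Integrable ψ ν := integrable_of_compl_null isCompact_Icc hab hψ
  have huc := (isCompact_Icc (a := a) (b := b + 1)).uniformContinuousOn_of_continuous
    hψ.continuousOn
  rw [Metric.tendsto_nhds]
  intro δ hδ
  obtain ⟨η, hη, hη'⟩ := Metric.uniformContinuousOn_iff.1 huc (δ / 2) (half_pos hδ)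
  have hev : ∀ᶠ h : ℝ in 𝓝[>] 0, h < min η 1 :=
    (eventually_lt_nhds (lt_min hη one_pos)).filter_mono nhdsWithin_le_nhds
  filter_upwards [self_mem_nhdsWithin, hev] with h hh0 hh
  have hh0 : 0 < h := hh0
  obtain ⟨hi, he⟩ := integral_smoothDens (h := h) hab hψ
  rw [he, dist_eq_norm, ← integral_sub hi hψi]
  have hs : ∀ᵐ s ∂ν, s ∈ Icc a b := hab
  have hb : ∀ᵐ s ∂ν, ‖(∫ t in Icc s (s + h), ψ t) / h - ψ s‖ ≤ δ / 2 := by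
    filter_upwards [hs] with s hs
    have hI : IntegrableOn ψ (Icc s (s + h)) := hψ.continuousOn.integrableOn_compact isCompact_Icc
    have e : (∫ t in Icc s (s + h), ψ t) / h - ψ s = (∫ t in Icc s (s + h), (ψ t - ψ s)) / h := by
      rw [integral_sub hI (integrable_const _), setIntegral_const,
        Real.volume_real_Icc_of_le (by linarith), smul_eq_mul]
      field_simp
      ring
    have e2 : ‖∫ t in Icc s (s + h), (ψ t - ψ s)‖ ≤ δ / 2 * volume.real (Icc s (s + h)) := by
      refine norm_setIntegral_le_of_norm_le_const measure_Icc_lt_top fun t ht => ?_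
      rw [← dist_eq_norm]
      have h1 := hh.trans_le (min_le_left η 1)
      have h2 := hh.trans_le (min_le_right η 1)
      refine (hη' t ⟨hs.1.trans ht.1, by linarith [ht.2, hs.2]⟩ s ⟨hs.1, by linarith [hs.2]⟩ ?_).le
      rw [Real.dist_eq, abs_of_nonneg (by linarith [ht.1])]
      linarith [ht.2]
    rw [Real.volume_real_Icc_of_le (by linarith), add_sub_cancel_left] at e2
    rw [e, norm_div, Real.norm_of_nonneg hh0.le]
    exact (div_le_iff₀ hh0).2 e2
  have := norm_integral_le_of_norm_le_const hb
  rw [probReal_univ, mul_one] at this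
  linarith

/-- The one-dimensional estimate for a measure satisfying a Brunn–Minkowski inequality, as a limit of
the estimate for the smoothed densities. -/
theorem BM.main {n : ℕ} (hn : 0 < n) {ν : Measure ℝ} [IsProbabilityMeasure ν]
    (hν : BM n ν) {a b : ℝ} (hab : ν (Icc a b)ᶜ = 0)
    {p : Polynomial ℝ} {d : ℕ} (hd : 0 < d) (hp : p.natDegree ≤ d)
    {G G' : ℝ → ℝ} {ε m : ℝ} (hε : 0 < ε) (hG : ∀ t, HasDerivAt G (G' t) t) (hG' : Continuous G')
    (hGε : ∀ t, |G t| ≤ ε) (hG1 : ∀ t, |G' t| ≤ 1) (hGm : ∀ t, m ≤ t → G' t = 0) :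
    (∫ x, max (p.eval x - m) 0 ^ 2 ∂ν) * max (∫ x, G' (p.eval x) ∂ν) 0 ^ (2 * d) ≤
      (27360 * min (d : ℝ) n) ^ (2 * d) * ε ^ 2 := by
  have hpc := p.continuous
  have t1 := tendsto_smoothDens hab (ψ := fun x => max (p.eval x - m) 0 ^ 2) (by fun_prop)
  have t2 := tendsto_smoothDens hab (ψ := fun x => G' (p.eval x)) (by fun_prop)
  refine le_of_tendsto (t1.mul ((t2.max tendsto_const_nhds).pow (2 * d))) ?_
  filter_upwards [self_mem_nhdsWithin] with h hh
  exact (isDens_smoothDens hn hν hab hh).main hn hd hp hε hG hG' hGε hG1 hGm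

end

/-! ### Reduction to a line -/

section

open Set Filter Topology

/-- A Brunn–Minkowski inequality passes to images under linear functionals. -/
theorem BM.map {m n : ℕ} {K : Set (Fin m → ℝ)} (hK : IsCompact K) {μ : Measure (Fin m → ℝ)}
    [IsProbabilityMeasure μ] (hμ : BM n μ) (hμK : μ Kᶜ = 0) (L : (Fin m → ℝ) →L[ℝ] ℝ) :
    BM n (μ.map L) := by
  have hreal : ∀ A : Set ℝ, IsCompact A → (μ.map L).real A = μ.real (L ⁻¹' A ∩ K) := by
    intro A hA
    rw [map_measureReal_apply L.continuous.measurable hA.measurableSet, measureReal_def,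
      measureReal_def, measure_inter_conull hμK]
  intro A B hA hB l α β hl hl1 hα hβ hαA hβB
  rw [hreal A hA] at hαA
  rw [hreal B hB] at hβB
  rw [hreal _ (hA.comb hB)]
  refine (hμ _ _ (hK.inter_left (hA.isClosed.preimage L.continuous))
    (hK.inter_left (hB.isClosed.preimage L.continuous)) l α β hl hl1 hα hβ hαA hβB).trans ?_
  have hsub : comb l (L ⁻¹' A ∩ K) (L ⁻¹' B ∩ K) ⊆ L ⁻¹' comb l A B := by
    rintro _ ⟨⟨x, y⟩, ⟨hx, hy⟩, rfl⟩
    simp only [mem_preimage, map_add, map_smul]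
    exact mem_comb hx.1 hy.1
  refine (measureReal_mono hsub).trans (le_of_eq ?_)
  rw [measureReal_def, measureReal_def, measure_inter_conull hμK]

/-- The restriction of a polynomial to a line is a polynomial of at most the same degree. -/
theorem exists_restrict_line {m d : ℕ} {f : MvPolynomial (Fin m) ℝ} (hf : f.totalDegree ≤ d)
    (y v : Fin m → ℝ) : ∃ p : Polynomial ℝ, p.natDegree ≤ d ∧
      ∀ t : ℝ, p.eval t = MvPolynomial.eval (t • v + y) f := by
  refine ⟨MvPolynomial.aeval (fun i => Polynomial.C (v i) * Polynomial.X + Polynomial.C (y i)) f,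
    ?_, fun t => ?_⟩
  · have := MvPolynomial.aeval_natDegree_le (n := 1) f hf
      (fun i => Polynomial.C (v i) * Polynomial.X + Polynomial.C (y i))
      (fun i => Polynomial.natDegree_linear_le)
    rwa [mul_one] at this
  · rw [← Polynomial.coe_evalRingHom, MvPolynomial.map_aeval]
    change _ = MvPolynomial.eval₂Hom (RingHom.id ℝ) (t • v + y) f
    congr 2
    · ext r
      simp only [RingHom.comp_apply, Polynomial.algebraMap_eq, Polynomial.coe_evalRingHom,
        Polynomial.eval_C, RingHom.id_apply]
    · ext i
      simp only [Polynomial.coe_evalRingHom, Polynomial.eval_add, Polynomial.eval_mul,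
        Polynomial.eval_C, Polynomial.eval_X, Pi.add_apply, Pi.smul_apply, smul_eq_mul]
      ring

/-- The estimate for test functions whose derivative vanishes on `[m, ∞)`. Localization, with
`g = max (f - m) 0 ^ 2 - V` and `h = G' ∘ f`, replaces Lebesgue measure on `K` by a measure on a line
with the same deviation `V` and a larger integral of `G' ∘ f`. -/
theorem one_sided {n d : ℕ} (hn : 0 < n) (hd : 0 < d) {K : Set (Fin n → ℝ)} (hK : IsCompact K)
    (hKc : Convex ℝ K) (hvol : volume K = 1) {f : MvPolynomial (Fin n) ℝ} (hf : f.totalDegree ≤ d)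
    {G G' : ℝ → ℝ} {ε m : ℝ} (hε : 0 < ε) (hG : ∀ t, HasDerivAt G (G' t) t) (hG' : Continuous G')
    (hGε : ∀ t, |G t| ≤ ε) (hG1 : ∀ t, |G' t| ≤ 1) (hGm : ∀ t, m ≤ t → G' t = 0) :
    (∫ x in K, max (MvPolynomial.eval x f - m) 0 ^ 2) *
      max (∫ x in K, G' (MvPolynomial.eval x f)) 0 ^ (2 * d) ≤
      (27360 * min (d : ℝ) n) ^ (2 * d) * ε ^ 2 := by
  have hprob : IsProbabilityMeasure (volume.restrict K) := ⟨by simpa using hvol⟩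
  have hFc : Continuous fun x => MvPolynomial.eval x f := MvPolynomial.continuous_eval f
  set V := ∫ x in K, max (MvPolynomial.eval x f - m) 0 ^ 2 with hV
  have hK0 : (volume.restrict K) Kᶜ = 0 := by
    rw [Measure.restrict_apply hK.measurableSet.compl, compl_inter_self, measure_empty]
  have hgc : Continuous fun x => max (MvPolynomial.eval x f - m) 0 ^ 2 := by fun_prop
  have hhc : Continuous fun x => G' (MvPolynomial.eval x f) := hG'.comp hFc
  obtain ⟨μ, hμp, hμ, hμK, hμg, hμh, x₀, v, hline⟩ := localization hn hK
    (g := fun x => max (MvPolynomial.eval x f - m) 0 ^ 2 - V) (hgc.sub continuous_const) hhc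
    (volume.restrict K) (BM.volume_restrict hK hKc) hK0 (by
      rw [integral_sub (integrable_of_compl_null hK hK0 hgc) (integrable_const _), ← hV]
      simp)
  rw [integral_sub (integrable_of_compl_null hK hμK hgc) (integrable_const _)] at hμg
  simp only [integral_const, probReal_univ, smul_eq_mul, one_mul] at hμg
  -- a coordinate on the line, also when the line degenerates to a point
  obtain ⟨L, hL⟩ : ∃ L : (Fin n → ℝ) →L[ℝ] ℝ, ∀ t : ℝ, L (t • v) • v = t • v := by
    by_cases hv : v = 0
    · exact ⟨0, fun t => by simp [hv]⟩
    · obtain ⟨L, hL⟩ := exists_dual_vector ℝ v (norm_ne_zero_iff.2 hv)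
      have hnv : ‖v‖ ≠ 0 := norm_ne_zero_iff.2 hv
      refine ⟨‖v‖⁻¹ • L, fun t => ?_⟩
      have : L v = ‖v‖ := by simpa using hL.2
      simp [this, hnv]
  obtain ⟨p, hp, hpe⟩ := exists_restrict_line hf (x₀ - L x₀ • v) v
  have hpL : ∀ᵐ x ∂μ, p.eval (L x) = MvPolynomial.eval x f := by
    filter_upwards [hline] with x ⟨t, ht⟩
    rw [hpe, ht, map_add, add_smul, hL]
    congr 2
    abel
  have hLm : AEMeasurable L μ := L.continuous.aemeasurable
  have := Measure.isProbabilityMeasure_map hLm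
  obtain ⟨a, b, hab⟩ : ∃ a b, L '' K ⊆ Icc a b := by
    have hb := (hK.image L.continuous).isBounded
    exact ⟨_, _, hb.subset_Icc_sInf_sSup⟩
  have hcar : (μ.map L) (Icc a b)ᶜ = 0 := by
    rw [Measure.map_apply L.continuous.measurable measurableSet_Icc.compl]
    exact measure_mono_null (fun x hx hxK => hx (hab ⟨x, hxK, rfl⟩)) hμK
  have key := (hμ.map hK hμK L).main hn hcar hd hp hε hG hG' hGε hG1 hGm
  have hpc := p.continuous
  have e1 : ∫ x, max (p.eval (L x) - m) 0 ^ 2 ∂μ = ∫ x, max (MvPolynomial.eval x f - m) 0 ^ 2 ∂μ :=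
    integral_congr_ae (hpL.mono fun x hx => by simp only [hx])
  have e2 : ∫ x, G' (p.eval (L x)) ∂μ = ∫ x, G' (MvPolynomial.eval x f) ∂μ :=
    integral_congr_ae (hpL.mono fun x hx => by simp only [hx])
  rw [integral_map hLm (by fun_prop : Continuous _).aestronglyMeasurable,
    integral_map hLm (by fun_prop : Continuous fun x => G' (p.eval x)).aestronglyMeasurable,
    e1, e2] at key
  refine le_trans ?_ key
  rw [show ∫ x, max (MvPolynomial.eval x f - m) 0 ^ 2 ∂μ = V by linarith]
  have hV0 : 0 ≤ V := integral_nonneg fun x => by positivity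
  gcongr

end

/-! ### The choice of the level and the truncation -/

section

open Set Filter Topology

/-- The square of the positive part is differentiable, also at `0`. -/
theorem hasDerivAt_max_sq (t : ℝ) : HasDerivAt (fun s : ℝ => max s 0 ^ 2) (2 * max t 0) t := by
  have e : (fun s : ℝ => max s 0 ^ 2) = fun s => (s * |s| + s ^ 2) / 2 := by
    funext s
    rcases le_total s 0 with hs | hs
    · rw [max_eq_right hs, abs_of_nonpos hs]; ring
    · rw [max_eq_left hs, abs_of_nonneg hs]; ring
  have h2 : HasDerivAt (fun s : ℝ => s * |s|) (2 * |t|) t := by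
    rcases lt_trichotomy t 0 with ht | rfl | ht
    · have : HasDerivAt (fun s : ℝ => -s ^ 2) (2 * |t|) t := by
        exact (hasDerivAt_pow 2 t).fun_neg.congr_deriv (by rw [abs_of_neg ht]; norm_num)
      refine this.congr_of_eventuallyEq ?_
      filter_upwards [eventually_lt_nhds ht] with s hs
      rw [abs_of_neg hs]; ring
    · rw [hasDerivAt_iff_isLittleO_nhds_zero]
      have : (fun h : ℝ => (0 + h) * |0 + h| - 0 * |(0 : ℝ)| - h • (2 * |(0 : ℝ)|)) =
          fun h => h * |h| := by funext h; simp
      rw [this]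
      have h3 : (fun h : ℝ => |h|) =o[𝓝 0] fun _ => (1 : ℝ) := by
        rw [Asymptotics.isLittleO_one_iff]
        exact (continuous_abs.tendsto' 0 0 abs_zero)
      simpa using (Asymptotics.isBigO_refl (fun h : ℝ => h) (𝓝 0)).mul_isLittleO h3
    · have : HasDerivAt (fun s : ℝ => s ^ 2) (2 * |t|) t := by
        exact (hasDerivAt_pow 2 t).congr_deriv (by rw [abs_of_pos ht]; norm_num)
      refine this.congr_of_eventuallyEq ?_
      filter_upwards [eventually_gt_nhds ht] with s hs
      rw [abs_of_pos hs]; ring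
  rw [e]
  refine ((h2.fun_add (hasDerivAt_pow 2 t)).div_const 2).congr_deriv ?_
  rcases le_total t 0 with ht | ht
  · rw [max_eq_right ht, abs_of_nonpos ht]; norm_num
  · rw [max_eq_left ht, abs_of_nonneg ht]; norm_num

/-- A `C¹` truncation: the identity on `(-∞, m - δ]`, constant on `[m, ∞)`, with slope in
`[0, 1]`. -/
theorem exists_truncation (m : ℝ) {δ : ℝ} (hδ : 0 < δ) : ∃ η η' : ℝ → ℝ,
    (∀ t, HasDerivAt η (η' t) t) ∧ Continuous η' ∧ (∀ t, 0 ≤ η' t) ∧ (∀ t, η' t ≤ 1) ∧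
      (∀ t, t ≤ m - δ → η t = t ∧ η' t = 1) ∧ ∀ t, m ≤ t → η' t = 0 := by
  refine ⟨fun t => t - max (t - (m - δ)) 0 ^ 2 / (2 * δ) + max (t - m) 0 ^ 2 / (2 * δ),
    fun t => 1 - max (t - (m - δ)) 0 / δ + max (t - m) 0 / δ, fun t => ?_, by fun_prop,
    fun t => ?_, fun t => ?_, fun t ht => ?_, fun t ht => ?_⟩
  · have h1 : ∀ c, HasDerivAt (fun t : ℝ => max (t - c) 0 ^ 2 / (2 * δ)) (max (t - c) 0 / δ) t := by
      intro c
      have := ((hasDerivAt_max_sq (t - c)).comp_sub_const t c).div_const (2 * δ)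
      rwa [mul_div_mul_left _ _ two_ne_zero] at this
    exact ((hasDerivAt_id t).sub (h1 (m - δ))).add (h1 m)
  · change 0 ≤ 1 - _ / δ + _ / δ
    rw [sub_add, ← sub_div, sub_nonneg, div_le_one hδ]
    rcases le_total (t - m) 0 with h | h
    · rw [max_eq_right h, sub_zero]; exact max_le (by linarith) hδ.le
    · rw [max_eq_left h, max_eq_left (by linarith)]; linarith
  · have : max (t - m) 0 / δ ≤ max (t - (m - δ)) 0 / δ :=
      div_le_div_of_nonneg_right (max_le_max_right _ (by linarith)) hδ.le
    change 1 - _ / δ + _ / δ ≤ 1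
    linarith
  · simp only
    rw [max_eq_right (by linarith : t - (m - δ) ≤ 0), max_eq_right (by linarith : t - m ≤ 0)]
    simp
  · simp only
    rw [max_eq_left (by linarith : 0 ≤ t - (m - δ)), max_eq_left (by linarith : 0 ≤ t - m)]
    field_simp
    ring

/-- A polynomial that is not constant has positive variance on a convex body. -/
theorem variance_pos {n : ℕ} {K : Set (Fin n → ℝ)} (hK : IsCompact K) (hint : (interior K).Nonempty)
    {f : MvPolynomial (Fin n) ℝ} (hf : ¬ ∃ c : ℝ, ∀ x : Fin n → ℝ, MvPolynomial.eval x f = c)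
    (c : ℝ) : 0 < ∫ x in K, (MvPolynomial.eval x f - c) ^ 2 := by
  have hFc : Continuous fun x => MvPolynomial.eval x f := MvPolynomial.continuous_eval f
  refine lt_of_le_of_ne (integral_nonneg fun x => sq_nonneg _) fun h0 => hf ⟨c, ?_⟩
  have hi : IntegrableOn (fun x => (MvPolynomial.eval x f - c) ^ 2) K :=
    (by fun_prop : Continuous fun x => (MvPolynomial.eval x f - c) ^ 2).continuousOn.integrableOn_compact hK
  have h1 := (integral_eq_zero_iff_of_nonneg (fun x => sq_nonneg _) hi).1 h0.symm
  have h2 : (fun x => MvPolynomial.eval x f) =ᵐ[volume.restrict (interior K)] fun _ => c := by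
    filter_upwards [ae_restrict_of_ae_restrict_of_subset interior_subset h1] with x hx
    exact sub_eq_zero.1 ((pow_eq_zero_iff two_ne_zero).1 hx)
  have h3 := Measure.eqOn_open_of_ae_eq h2 isOpen_interior hFc.continuousOn continuousOn_const
  obtain ⟨x₀, hx₀⟩ := hint
  obtain ⟨r, hr, hball⟩ := Metric.isOpen_iff.1 isOpen_interior x₀ hx₀
  have h4 : f = MvPolynomial.C c := by
    refine MvPolynomial.funext_set (fun i => Metric.ball (x₀ i) r) (fun i => ?_) fun x hx => ?_
    · rw [Real.ball_eq_Ioo]; exact Ioo_infinite (by linarith)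
    · rw [MvPolynomial.eval_C]
      exact h3 (hball (by rwa [ball_pi _ hr]))
  intro x
  rw [h4, MvPolynomial.eval_C]

/-- There is a level `m` above and below which `F` has the same, hence substantial, quadratic
deviation. -/
theorem exists_level {n : ℕ} {K : Set (Fin n → ℝ)} (hK : IsCompact K) (hvol : volume K = 1)
    {F : (Fin n → ℝ) → ℝ} (hF : Continuous F) : ∃ m : ℝ,
      (∫ x in K, (F x - ∫ y in K, F y) ^ 2) / 2 ≤ ∫ x in K, max (F x - m) 0 ^ 2 ∧
      (∫ x in K, (F x - ∫ y in K, F y) ^ 2) / 2 ≤ ∫ x in K, max (m - F x) 0 ^ 2 := by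
  have hprob : IsProbabilityMeasure (volume.restrict K) := ⟨by simpa using hvol⟩
  have hint : ∀ u : (Fin n → ℝ) → ℝ, Continuous u → Integrable u (volume.restrict K) :=
    fun u hu => hu.continuousOn.integrableOn_compact hK
  obtain ⟨C, hC⟩ := hK.exists_bound_of_continuousOn hF.continuousOn
  set A : ℝ → ℝ := fun m => ∫ x in K, max (F x - m) 0 ^ 2
  set B : ℝ → ℝ := fun m => ∫ x in K, max (m - F x) 0 ^ 2
  have hAc : Continuous A := continuous_parametric_integral_of_continuous
    (f := fun m x => max (F x - m) 0 ^ 2) (by fun_prop) hK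
  have hBc : Continuous B := continuous_parametric_integral_of_continuous
    (f := fun m x => max (m - F x) 0 ^ 2) (by fun_prop) hK
  have hA0 : ∀ m, 0 ≤ A m := fun m => integral_nonneg fun x => sq_nonneg _
  have hB0 : ∀ m, 0 ≤ B m := fun m => integral_nonneg fun x => sq_nonneg _
  have hAC : A |C| = 0 := setIntegral_eq_zero_of_forall_eq_zero fun x hx => by
    have := (le_abs_self _).trans ((hC x hx).trans (le_abs_self C))
    rw [max_eq_right (by linarith)]; norm_num
  have hBC : B (-|C|) = 0 := setIntegral_eq_zero_of_forall_eq_zero fun x hx => by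
    have := (neg_abs_le (F x))
    have h2 := (hC x hx).trans (le_abs_self C)
    rw [Real.norm_eq_abs] at h2
    rw [max_eq_right (by linarith)]; norm_num
  obtain ⟨m, -, hm⟩ := intermediate_value_Icc' (a := -|C|) (b := |C|)
    (by linarith [abs_nonneg C]) (hAc.sub hBc).continuousOn
    (show (0 : ℝ) ∈ Icc ((A - B) |C|) ((A - B) (-|C|)) by
      constructor
      · rw [Pi.sub_apply, hAC]; linarith [hB0 |C|]
      · rw [Pi.sub_apply, hBC]; linarith [hA0 (-|C|)])
  have hm : A m - B m = 0 := hm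
  set c := ∫ y in K, F y with hc
  have hsum : A m + B m = ∫ x in K, (F x - m) ^ 2 := by
    rw [← integral_add (hint _ (by fun_prop)) (hint _ (by fun_prop))]
    refine integral_congr_ae (ae_of_all _ fun x => ?_)
    simp only
    rcases le_total (F x) m with h | h
    · rw [max_eq_right (by linarith), max_eq_left (by linarith)]; ring
    · rw [max_eq_left (by linarith), max_eq_right (by linarith)]; ring
  have hvar : ∫ x in K, (F x - m) ^ 2 = (∫ x in K, (F x - c) ^ 2) + (c - m) ^ 2 := by
    have e : ∀ x, (F x - m) ^ 2 = (F x - c) ^ 2 + (2 * (c - m) * (F x - c) + (c - m) ^ 2) :=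
      fun x => by ring
    rw [integral_congr_ae (ae_of_all _ e), integral_add (hint _ (by fun_prop)) (hint _ (by fun_prop)),
      integral_add (hint _ (by fun_prop)) (hint _ (by fun_prop)), integral_const_mul,
      integral_sub (hint _ hF) (hint _ continuous_const), ← hc]
    simp
  have h5 := sq_nonneg (c - m)
  exact ⟨m, by change _ ≤ A m; linarith, by change _ ≤ B m; linarith⟩

/-- Extraction of the root of order `2d`; the factor `4` in `D / 4` is absorbed by `2 ^ (2 * d)`. -/
theorem le_of_main_ineq {d : ℕ} (hd : 0 < d) {D A T k ε : ℝ} (hD : 0 < D) (hε : 0 < ε) (hk : 0 ≤ k)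
    (hA : D / 4 ≤ A) (h : A * max T 0 ^ (2 * d) ≤ k ^ (2 * d) * ε ^ 2) :
    T ≤ 2 * k * (D ^ (-(1 / (2 * (d : ℝ)))) * ε ^ (1 / (d : ℝ))) := by
  have h1 : D ^ (-(1 / (2 * (d : ℝ)))) = (D⁻¹) ^ (((2 * d : ℕ) : ℝ)⁻¹) := by
    rw [Real.rpow_neg hD.le, Real.inv_rpow hD.le]; push_cast; rw [one_div]
  have hr0 : 0 ≤ 2 * k * (D ^ (-(1 / (2 * (d : ℝ)))) * ε ^ (1 / (d : ℝ))) := by positivity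
  refine (le_max_left T 0).trans ((pow_le_pow_iff_left₀ (le_max_right _ _) hr0
    (by omega : 2 * d ≠ 0)).1 ?_)
  have h2 : (ε ^ (1 / (d : ℝ))) ^ (2 * d) = ε ^ 2 := by
    rw [mul_comm, pow_mul, one_div, Real.rpow_inv_natCast_pow hε.le hd.ne']
  rw [mul_pow, mul_pow, mul_pow, h2, h1, Real.rpow_inv_natCast_pow (inv_nonneg.2 hD.le) (by omega)]
  have h3 : D / 4 * max T 0 ^ (2 * d) ≤ k ^ (2 * d) * ε ^ 2 :=
    (mul_le_mul_of_nonneg_right hA (by positivity)).trans h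
  have h4 : (4 : ℝ) ≤ 2 ^ (2 * d) := by
    calc (4 : ℝ) = 2 ^ 2 := by norm_num
      _ ≤ 2 ^ (2 * d) := pow_le_pow_right₀ one_le_two (by omega)
  calc max T 0 ^ (2 * d) = 4 * D⁻¹ * (D / 4 * max T 0 ^ (2 * d)) := by field_simp
    _ ≤ 4 * D⁻¹ * (k ^ (2 * d) * ε ^ 2) := mul_le_mul_of_nonneg_left h3 (by positivity)
    _ = 4 * (k ^ (2 * d) * (D⁻¹ * ε ^ 2)) := by ring
    _ ≤ 2 ^ (2 * d) * (k ^ (2 * d) * (D⁻¹ * ε ^ 2)) :=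
        mul_le_mul_of_nonneg_right h4 (by positivity)
    _ = _ := by ring

end

/-! ### The regularity estimate -/

open Set Filter Topology

/-- **Theorem (main regularity estimate).**  There is an absolute constant `C > 0` such that
for all `n, d ∈ ℕ`, every convex body `K ⊂ ℝⁿ` of volume `1` and every non-constant
polynomial `f` of degree at most `d`, one has
`σ(μ_K ∘ f⁻¹, ε) ≤ C · min{d,n} · (𝔻_K f)^{-1/(2d)} · ε^{1/d}` for all `ε > 0`. -/
theorem carbery_wright_regularity :
    ∃ C : ℝ, 0 < C ∧ ∀ (n d : ℕ), 0 < n → 0 < d →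
      ∀ K : Set (Fin n → ℝ), IsCompact K → Convex ℝ K → (interior K).Nonempty →
        volume K = 1 →
      ∀ f : MvPolynomial (Fin n) ℝ, f.totalDegree ≤ d →
        (¬ ∃ c : ℝ, ∀ x : Fin n → ℝ, MvPolynomial.eval x f = c) →
      ∀ ε : ℝ, 0 < ε →
        sigmaMod (Measure.map (fun x => MvPolynomial.eval x f) (volume.restrict K)) ε ≤
          C * min (d : ℝ) (n : ℝ) *
            (∫ x in K, (MvPolynomial.eval x f - ∫ y in K, MvPolynomial.eval y f) ^ 2) ^
              (-(1 / (2 * (d : ℝ)))) *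
            ε ^ (1 / (d : ℝ)) := by
  -- the part of `φ` below `m` contributes `2 * 27360`; the remaining part is halved to keep the
  -- bounds on the test function and so contributes twice as much
  refine ⟨6 * 27360, by norm_num, fun n d hn hd K hK hKc hKi hvol f hf hfc ε hε => ?_⟩
  have hD := variance_pos hK hKi hfc (∫ y in K, MvPolynomial.eval y f)
  have hFc : Continuous fun x => MvPolynomial.eval x f := MvPolynomial.continuous_eval f
  obtain ⟨m, hm1, hm2⟩ := exists_level hK hvol hFc
  set D := ∫ x in K, (MvPolynomial.eval x f - ∫ y in K, MvPolynomial.eval y f) ^ 2 with hDdef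
  refine Real.sSup_le ?_ (by positivity)
  rintro _ ⟨φ, ⟨hφ, -⟩, hφε, hφ1, rfl⟩
  have hφd : ∀ t, HasDerivAt φ (deriv φ t) t := fun t =>
    (hφ.differentiable (by simp) t).hasDerivAt
  have hφc : Continuous (deriv φ) := hφ.continuous_deriv (by simp)
  have hφc' : Continuous φ := hφ.continuous
  rw [integral_map hFc.aemeasurable hφc.aestronglyMeasurable]
  -- the lower deviation is continuous in the level, which leaves room for the cutoff
  have hBc : Continuous fun s : ℝ => ∫ x in K, max (s - MvPolynomial.eval x f) 0 ^ 2 :=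
    continuous_parametric_integral_of_continuous
      (f := fun s x => max (s - MvPolynomial.eval x f) 0 ^ 2) (by fun_prop) hK
  obtain ⟨r, hr, hball⟩ := Metric.eventually_nhds_iff.1
    (hBc.continuousAt.eventually_const_lt (show D / 4 < _ by linarith) : ∀ᶠ s in 𝓝 m, _)
  have hδ : 0 < r / 2 := half_pos hr
  have hB := hball (y := m - r / 2) (by
    rw [Real.dist_eq, show m - r / 2 - m = -(r / 2) by ring, abs_neg, abs_of_pos hδ]; linarith)
  obtain ⟨η, η', hη, hη'c, hη0, hη1, hηl, hηr⟩ := exists_truncation m hδ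
  have hηc : Continuous η := continuous_iff_continuousAt.2 fun t => (hη t).continuousAt
  have hG : ∀ t, HasDerivAt (fun t => φ (η t)) (deriv φ (η t) * η' t) t := fun t =>
    (hφd (η t)).comp t (hη t)
  have hG1 : ∀ t, |deriv φ (η t) * η' t| ≤ 1 := fun t => by
    rw [abs_mul, abs_of_nonneg (hη0 t)]
    exact mul_le_one₀ (hφ1 _) (hη0 t) (hη1 t)
  have h1 := le_of_main_ineq hd hD hε (by positivity) (by linarith)
    (one_sided hn hd hK hKc hvol hf hε hG (by fun_prop) (fun t => hφε _) hG1
    (fun t ht => by rw [hηr t ht, mul_zero]) (m := m))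
  -- the remaining part of `φ` is constant on `(-∞, m - δ]`, so the reflection of `f` turns it into a
  -- test function of the same kind
  have hf' : (-f).totalDegree ≤ d := by rwa [MvPolynomial.totalDegree_neg]
  have hH : ∀ t, HasDerivAt (fun t => -((φ (-t) - φ (η (-t))) / 2))
      ((deriv φ (-t) - deriv φ (η (-t)) * η' (-t)) / 2) t := fun t => by
    have := ((((hφd (-t)).sub (hG (-t))).scomp t (hasDerivAt_neg t)).div_const 2).neg
    exact this.congr_deriv (by simp only [smul_eq_mul]; ring)
  have h2 := le_of_main_ineq hd hD hε (by positivity) ?_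
    (one_sided hn hd hK hKc hvol hf' hε hH (by fun_prop) (fun t => ?_) (fun t => ?_)
    (fun t ht => ?_) (m := -(m - r / 2)))
  · simp only [map_neg, neg_neg] at h2
    have hint : ∀ u : (Fin n → ℝ) → ℝ, Continuous u → Integrable u (volume.restrict K) :=
      fun u hu => hu.continuousOn.integrableOn_compact hK
    have e : ∫ x in K, deriv φ (MvPolynomial.eval x f) =
        (∫ x in K, deriv φ (η (MvPolynomial.eval x f)) * η' (MvPolynomial.eval x f)) +
        2 * ∫ x in K, (deriv φ (MvPolynomial.eval x f) -
          deriv φ (η (MvPolynomial.eval x f)) * η' (MvPolynomial.eval x f)) / 2 := by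
      rw [← integral_const_mul, ← integral_add (hint _ (by fun_prop)) (hint _ (by fun_prop))]
      exact integral_congr_ae (ae_of_all _ fun x => by simp only; ring)
    rw [e]
    linarith
  · refine hB.le.trans (le_of_eq (integral_congr_ae (ae_of_all _ fun x => ?_)))
    simp only [map_neg]
    congr 2
    ring
  · have a1 := abs_le.1 (hφε (-t))
    have a2 := abs_le.1 (hφε (η (-t)))
    rw [abs_le]
    constructor <;> linarith
  · have a1 := abs_le.1 (hφ1 (-t))
    have a2 := abs_le.1 (hG1 (-t))
    rw [abs_le]
    constructor <;> linarith
  · obtain ⟨b1, b2⟩ := hηl (-t) (by linarith)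
    rw [b1, b2]
    simp
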